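/- arXiv:2506.08129 — 4 statements merged into one kernel-verified Lean document; each statement's English description precedes it below -/
import Mathlib

section
/- Under the stated hypotheses (exponentially stable origin certified by the Lyapunov function V with constants c₁, c₂, c₃, c₄, the input perturbation bound with constant K, initial condition ‖a₀‖ ≤ δ√(c₁/c₂), and input satisfying sup_{0≤t≤τ} ‖f(t)‖ ≤ min{r_u, c₁c₃δ/(c₂c₄K)}), every continuously differentiable solution a : [0,τ] → D of ȧ(t) = N(t, a(t), f(t)) with a(0) = a₀ satisfies ‖a(t)‖ ≤ δ for all t ∈ [0,τ]. -/
/-!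
The function `V` is assumed to have partial derivatives in `t` and in `a`, but no joint
differentiability, so the chain rule for `t ↦ V t (a t)` may fail at individual times. What survives
is the integrated inequality `diag_le_of_partials`, applied to `F t u = V t (a u)`, which is
Lipschitz in `u`. If `F_t + F_u ≤ c` on the diagonal, then `t ↦ F t t` has upper Dini derivatives
bounded above, and the mean of its difference quotients `(F (t+h) (t+h) - F t t) / h` can be
compared with the mean of the sum of the two partial difference quotients at `t`: a translation of
the integration variable by `h` moves the increment in `u` from first argument `t + h` to `t`.
Dominated convergence, with the integrand cut off below at `c`, then gives
`F β β - F α α ≤ c (β - α)`.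

With this, the classical argument runs as follows. Put `σ = δ √(c₁/c₂)`. Where `‖a‖ ≥ σ`, the formal
derivative of `V` along the trajectory is at most `-c₃ σ (σ - c₁δ/c₂) ≤ 0`. Suppose the trajectory
leaves the ball of radius `δ`.

* If `c₁ < c₂`, let `s` be the first time with `‖a s‖ = δ` and `r < s` the last earlier time in the
  ball of radius `σ`. Up to `s` the trajectory is in the closed `δ`-ball, where `V t` is Lipschitz.
  The decay is strict, so `c₁δ² ≤ V s (a s) < V r (a r) ≤ c₂σ² = c₁δ²`, a contradiction.
* If `c₁ = c₂`, then `V t x = c₁‖x‖²` on `D`, which is Lipschitz along the whole trajectory, and the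
  same comparison with a time `s` at which `‖a s‖ > δ` is contradictory even without strict decay.
-/

noncomputable section

open Set MeasureTheory

/-- Truncation of a signal: equals `g` on `(-∞, τ]` (in particular on `[0, τ]`) and `0` for `t > τ`. -/
def trunc {E : Type*} [Zero E] (τ : ℝ) (g : ℝ → E) : ℝ → E := fun t => if t ≤ τ then g t else 0

/-- The `L∞` norm of a signal on `[0, ∞)`: `sup_{t ≥ 0} ‖g t‖`. -/
def LinfNorm {E : Type*} [NormedAddCommGroup E] (g : ℝ → E) : ℝ := ⨆ t : Set.Ici (0:ℝ), ‖g t.1‖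

/-- The `Lp` norm of a signal on `[0, ∞)`: `(∫₀^∞ ‖g t‖^p dt)^(1/p)`. -/
def LpNorm {E : Type*} [NormedAddCommGroup E] (p : ℝ) (g : ℝ → E) : ℝ :=
  (∫ t in Set.Ioi (0:ℝ), ‖g t‖ ^ p) ^ (1/p)

section

open Filter Topology

/-! ### The diagonal of a separately differentiable function -/

/-- A crude growth bound on the diagonal. Since `|q| ≤ L`, the condition `p + q ≤ c` bounds `p`
above, although not below, so every upper right Dini derivative of `t ↦ F t t` is at most
`|c| + 2L`. -/
theorem diag_increment_le_of_partials {F : ℝ → ℝ → ℝ} {L c α β : ℝ} {p q : ℝ → ℝ}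
    (hcont : Continuous fun t => F t t)
    (hL : ∀ t u u', |F t u - F t u'| ≤ L * |u - u'|)
    (hp : ∀ t ∈ Ioo α β, HasDerivAt (fun s => F s t) (p t) t)
    (hq : ∀ t ∈ Ioo α β, HasDerivAt (fun u => F t u) (q t) t)
    (hpq : ∀ t ∈ Ioo α β, p t + q t ≤ c) :
    ∀ u ∈ Ioo α β, ∀ v ∈ Icc u β, F v v - F u u ≤ (|c| + 2 * L) * (v - u) := by
  have hL0 : 0 ≤ L := by simpa using (abs_nonneg _).trans (hL 0 1 0)
  intro u hu v hv
  have key := image_le_of_liminf_slope_right_le_deriv_boundary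
    (f := fun t => F t t) (a := u) (b := β) hcont.continuousOn
    (B := fun t => F u u + (|c| + 2 * L) * (t - u)) (B' := fun _ => |c| + 2 * L)
    (by simp) (by fun_prop)
    (fun x _ => by
      simpa using ((((hasDerivAt_id x).sub_const u).const_mul (|c| + 2 * L)).const_add
        (F u u)).hasDerivWithinAt)
    (by
      intro x hx r hr
      have hx' : x ∈ Ioo α β := ⟨hu.1.trans_le hx.1, hx.2⟩
      have hqx : |q x| ≤ L := (hq x hx').le_of_lip' hL0 (Eventually.of_forall fun y => hL x y x)
      have hpx : p x < r - L := by
        have h1 := hpq x hx'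
        have h2 := (abs_le.1 hqx).1
        have h3 := le_abs_self c
        linarith
      have hs := (hasDerivAt_iff_tendsto_slope_left_right.1 (hp x hx')).2
      refine Eventually.frequently ?_
      filter_upwards [hs.eventually_lt_const hpx, self_mem_nhdsWithin] with z hz hxz
      have hzx : 0 < z - x := sub_pos.2 hxz
      rw [slope_def_field] at hz ⊢
      have h4 := (le_abs_self _).trans (hL z z x)
      rw [abs_of_pos hzx] at h4
      rw [div_lt_iff₀ hzx] at hz ⊢
      linarith) hv
  linarith

/-- A one-sided chain rule along the diagonal, in integrated form, for an `F` that is only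
separately differentiable. Joint differentiability may fail at individual points of the diagonal,
so the estimate is obtained by integrating difference quotients instead of differentiating
`t ↦ F t t`. The hypothesis `hβ` controls the quotients that reach past `β`. -/
theorem diag_le_of_partials {F : ℝ → ℝ → ℝ} {L c α β : ℝ} {p q : ℝ → ℝ} (hαβ : α ≤ β)
    (hF : ∀ u, Continuous fun t => F t u)
    (hL : ∀ t u u', |F t u - F t u'| ≤ L * |u - u'|)
    (hp : ∀ t ∈ Ioo α β, HasDerivAt (fun s => F s t) (p t) t)
    (hq : ∀ t ∈ Ioo α β, HasDerivAt (fun u => F t u) (q t) t)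
    (hpq : ∀ t ∈ Ioo α β, p t + q t ≤ c)
    (hβ : ∀ t, β ≤ t → F t t ≤ F β β) :
    F β β ≤ F α α + c * (β - α) := by
  have hL0 : 0 ≤ L := by simpa using (abs_nonneg _).trans (hL 0 1 0)
  have hFc : Continuous fun x : ℝ × ℝ => F x.1 x.2 := by
    refine continuous_prod_of_continuous_lipschitzWith' _ (Real.toNNReal L) (fun t => ?_) hF
    refine LipschitzWith.of_dist_le_mul fun u u' => ?_
    simpa [Real.dist_eq, Real.coe_toNNReal L hL0] using hL t u u'
  have hcomp : ∀ {g k : ℝ → ℝ}, Continuous g → Continuous k → Continuous fun t => F (g t) (k t) :=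
    fun hg hk => hFc.comp (hg.prodMk hk)
  have hgt : 𝓝[>] (0 : ℝ) ≤ 𝓝[≠] 0 :=
    nhdsWithin_mono _ fun x (hx : 0 < x) => ne_of_gt hx
  have hφ : Continuous fun t => F t t := hcomp continuous_id continuous_id
  set C := |c| + 2 * L with hC
  have hC0 : 0 ≤ C := by positivity
  have hdini : ∀ t ∈ Ioo α β, ∀ h, 0 < h → F (t + h) (t + h) - F t t ≤ C * h := by
    intro t ht h hh
    have hd := diag_increment_le_of_partials hφ hL hp hq hpq t ht
    rcases le_total (t + h) β with hle | hle
    · simpa using hd (t + h) ⟨by linarith, hle⟩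
    · have h1 := hd β ⟨ht.2.le, le_rfl⟩
      have h2 := hβ _ hle
      have h3 : C * (β - t) ≤ C * h := mul_le_mul_of_nonneg_left (by linarith) hC0
      linarith
  -- `G h` is the increment in the second variable, `J h` the sum of both increments based at `t`
  let G : ℝ → ℝ → ℝ := fun h t => F t t - F t (t - h)
  let J : ℝ → ℝ → ℝ := fun h t => max (h⁻¹ * (F (t + h) t - F t t + G h t)) c
  have hGc : ∀ h, Continuous (G h) := fun h =>
    hφ.sub (hcomp continuous_id (continuous_id.sub continuous_const))
  have hWc : ∀ h, Continuous fun t => F (t + h) t := fun h =>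
    hcomp (continuous_id.add continuous_const) continuous_id
  have hKc : ∀ h, Continuous fun t => F (t + h) t - F t t := fun h => (hWc h).sub hφ
  have hJc : ∀ h, Continuous (J h) := fun h =>
    (continuous_const.mul ((hKc h).add (hGc h))).max continuous_const
  have hG : ∀ h, 0 < h → ∀ t, |G h t| ≤ L * h := by
    intro h hh t
    have := hL t t (t - h)
    rwa [sub_sub_cancel, abs_of_pos hh] at this
  have hne : ∀ᵐ t : ℝ, t ∈ uIoc α β → t ∈ Ioo α β := by
    have : ∀ᵐ t : ℝ, t ≠ β := by simp [ae_iff]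
    filter_upwards [this] with t ht htm
    rw [uIoc_of_le hαβ] at htm
    exact ⟨htm.1, lt_of_le_of_ne htm.2 ht⟩
  -- the maximum with `c` supplies the lower bound missing for `p`; the Dini bound `hdini` gives the
  -- upper bound, so dominated convergence applies
  have hJlim : Tendsto (fun h => ∫ t in α..β, J h t) (𝓝[>] 0) (𝓝 (∫ _ in α..β, c)) := by
    refine intervalIntegral.tendsto_integral_filter_of_dominated_convergence
      (fun _ => |c| + (C + 2 * L)) (Eventually.of_forall fun h => (hJc h).aestronglyMeasurable)
      ?_ (by simp) ?_
    · filter_upwards [self_mem_nhdsWithin] with h (hh : 0 < h)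
      filter_upwards [hne] with t ht htm
      have hd := hdini t (ht htm) h hh
      have h1 := (abs_le.1 (hL (t + h) (t + h) t)).1
      rw [add_sub_cancel_left, abs_of_pos hh] at h1
      have h2 := (abs_le.1 (hG h hh t)).2
      have h3 : h⁻¹ * (F (t + h) t - F t t + G h t) ≤ C + 2 * L := by
        rw [inv_mul_le_iff₀ hh]; linarith
      rw [Real.norm_eq_abs, abs_le]
      have h4 := neg_abs_le c
      have h5 := le_abs_self c
      constructor
      · exact le_trans (by linarith) (le_max_right _ _)
      · exact max_le (by linarith [abs_nonneg c]) (by linarith)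
    · filter_upwards [hne] with t ht htm
      have htI := ht htm
      have h1 : Tendsto (fun h => h⁻¹ * (F (t + h) t - F t t)) (𝓝[>] 0) (𝓝 (p t)) := by
        simpa using (hasDerivAt_iff_tendsto_slope_zero.1 (hp t htI)).mono_left hgt
      have h2 : Tendsto (fun h => h⁻¹ * G h t) (𝓝[>] 0) (𝓝 (q t)) := by
        have hneg : Tendsto (fun h : ℝ => -h) (𝓝[>] 0) (𝓝[≠] 0) := by
          refine tendsto_nhdsWithin_iff.2 ⟨?_, ?_⟩
          · have : Tendsto (fun h : ℝ => -h) (𝓝 0) (𝓝 0) := by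
              simpa using (continuous_neg (G := ℝ)).tendsto 0
            exact this.mono_left nhdsWithin_le_nhds
          · filter_upwards [self_mem_nhdsWithin] with h (hh : 0 < h)
            simpa using hh.ne'
        refine ((hasDerivAt_iff_tendsto_slope_zero.1 (hq t htI)).comp hneg).congr fun h => ?_
        simp only [Function.comp, smul_eq_mul, G, inv_neg, ← sub_eq_add_neg]
        ring
      have h3 := (h1.add h2).max (tendsto_const_nhds (x := c))
      rw [max_eq_right (hpq t htI)] at h3
      exact h3.congr fun h => by simp only [J, mul_add]
  have hφlim : Tendsto (fun h => h⁻¹ * ((∫ t in β..β + h, F t t) - ∫ t in α..α + h, F t t))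
      (𝓝[>] 0) (𝓝 (F β β - F α α)) := by
    have hder : ∀ x, Tendsto (fun h => h⁻¹ * (∫ t in x..x + h, F t t)) (𝓝[>] 0) (𝓝 (F x x)) := by
      intro x
      have := intervalIntegral.integral_hasDerivAt_right (hφ.intervalIntegrable x x)
        (hφ.stronglyMeasurableAtFilter _ _) hφ.continuousAt
      simpa using (hasDerivAt_iff_tendsto_slope_zero.1 this).mono_left hgt
    exact ((hder β).sub (hder α)).congr fun h => by ring
  -- the increment in the second variable occurs at first argument `t + h`; translating the integral
  -- moves it to `t`, at the cost of two boundary terms of size `L * h ^ 2`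
  have hle : ∀ᶠ h in 𝓝[>] (0 : ℝ), h⁻¹ * ((∫ t in β..β + h, F t t) - ∫ t in α..α + h, F t t) ≤
      (∫ t in α..β, J h t) + 2 * L * h := by
    filter_upwards [self_mem_nhdsWithin] with h (hh : 0 < h)
    have hshift : ∀ {g : ℝ → ℝ}, Continuous g →
        (∫ t in α..β, g (t + h)) = (∫ t in α..β, g t) + (∫ t in β..β + h, g t)
          - ∫ t in α..α + h, g t := by
      intro g hg
      rw [intervalIntegral.integral_comp_add_right]
      have := intervalIntegral.integral_interval_sub_interval_comm (μ := volume)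
        (hg.intervalIntegrable (α + h) (β + h)) (hg.intervalIntegrable α β)
        (hg.intervalIntegrable (α + h) α)
      rw [intervalIntegral.integral_symm α (α + h), intervalIntegral.integral_symm β (β + h)] at this
      linarith
    have e1 := hshift hφ
    have e2 := hshift (hGc h)
    have e3 : (∫ t in α..β, F (t + h) (t + h)) =
        (∫ t in α..β, (F (t + h) t - F t t)) + (∫ t in α..β, F t t)
          + ∫ t in α..β, G h (t + h) := by
      rw [← intervalIntegral.integral_add, ← intervalIntegral.integral_add]
      · refine intervalIntegral.integral_congr fun t _ => ?_
        simp [G]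
      all_goals apply Continuous.intervalIntegrable
      · exact (hKc h).add hφ
      · exact (hGc h).comp (continuous_id.add continuous_const)
      · exact hKc h
      · exact hφ
    have e4 : (∫ t in α..β, (F (t + h) t - F t t)) + (∫ t in α..β, G h t)
        ≤ h * ∫ t in α..β, J h t := by
      rw [← intervalIntegral.integral_add ((hKc h).intervalIntegrable _ _)
        ((hGc h).intervalIntegrable _ _), ← intervalIntegral.integral_const_mul]
      refine intervalIntegral.integral_mono_on hαβ
        (((hKc h).add (hGc h)).intervalIntegrable _ _)
        ((continuous_const.mul (hJc h)).intervalIntegrable _ _) fun t _ => ?_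
      rw [← inv_mul_le_iff₀ hh]
      exact le_max_left _ _
    have hedge : ∀ x, |∫ t in x..x + h, G h t| ≤ L * h * h := by
      intro x
      have := intervalIntegral.norm_integral_le_of_norm_le_const (a := x) (b := x + h)
        (f := G h) (C := L * h) fun t _ => hG h hh t
      rwa [add_sub_cancel_left, abs_of_pos hh] at this
    have h1 := (abs_le.1 (hedge β)).2
    have h2 := (abs_le.1 (hedge α)).1
    rw [inv_mul_le_iff₀ hh]
    linarith
  have hrhs : Tendsto (fun h => (∫ t in α..β, J h t) + 2 * L * h) (𝓝[>] 0)
      (𝓝 ((∫ _ in α..β, c) + 2 * L * 0)) :=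
    hJlim.add ((tendsto_const_nhds.mul tendsto_id).mono_left nhdsWithin_le_nhds)
  have := le_of_tendsto_of_tendsto hφlim hrhs hle
  simp only [intervalIntegral.integral_const, smul_eq_mul] at this
  linarith

/-! ### Lyapunov functions along a trajectory -/

/-- A pointwise bound on the formal derivative of `V` along a curve integrates to a bound on `V`,
without joint differentiability of `V`. -/
theorem lyapunov_decrease_along {E : Type*} [NormedAddCommGroup E] [NormedSpace ℝ E]
    {V Vt : ℝ → E → ℝ} {DVa : ℝ → E → (E →L[ℝ] ℝ)} {a a' : ℝ → E} {r s M c : ℝ} (hrs : r ≤ s)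
    (hVdt : ∀ t ∈ Icc r s, ∀ u ∈ Icc r s, HasDerivAt (fun x => V x (a u)) (Vt t (a u)) t)
    (hVda : ∀ t ∈ Icc r s, HasFDerivAt (fun b => V t b) (DVa t (a t)) (a t))
    (ha : ∀ t ∈ Icc r s, HasDerivWithinAt a (a' t) (Icc r s) t)
    (hlip : ∀ t ∈ Icc r s, ∀ u ∈ Icc r s, ∀ u' ∈ Icc r s,
      |V t (a u) - V t (a u')| ≤ M * |u - u'|)
    (hc : ∀ t ∈ Icc r s, Vt t (a t) + DVa t (a t) (a' t) ≤ c) :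
    V s (a s) ≤ V r (a r) + c * (s - r) := by
  rcases hrs.eq_or_lt with rfl | hlt
  · simp
  have hM0 : 0 ≤ M := by
    have h1 := (abs_nonneg _).trans
      (hlip r (left_mem_Icc.2 hrs) s (right_mem_Icc.2 hrs) r (left_mem_Icc.2 hrs))
    rw [abs_of_pos (sub_pos.2 hlt)] at h1
    exact nonneg_of_mul_nonneg_left h1 (sub_pos.2 hlt)
  -- clamping the time makes the function of two times total and constant past `s`
  let π : ℝ → ℝ := fun t => projIcc r s hrs t
  have hπ : ∀ t, π t ∈ Icc r s := fun t => (projIcc r s hrs t).2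
  have hπc : Continuous π := continuous_subtype_val.comp continuous_projIcc
  have hπid : ∀ t ∈ Icc r s, π t = t := fun t ht => by simp [π, projIcc_of_mem hrs ht]
  have hπev : ∀ t ∈ Ioo r s, ∀ᶠ x in 𝓝 t, π x = x := fun t ht => by
    filter_upwards [Icc_mem_nhds ht.1 ht.2] with x hx using hπid x hx
  have hr : π r = r := hπid r (left_mem_Icc.2 hrs)
  have hs : π s = s := hπid s (right_mem_Icc.2 hrs)
  have key := diag_le_of_partials (F := fun t u => V (π t) (a (π u))) (L := M) (c := c)
    (p := fun t => Vt t (a t)) (q := fun t => DVa t (a t) (a' t)) hrs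
    (fun u => continuous_iff_continuousAt.2 fun t =>
      ContinuousAt.comp (f := π) (g := fun x => V x (a (π u)))
        (hVdt (π t) (hπ t) (π u) (hπ u)).continuousAt hπc.continuousAt)
    (fun t u u' => (hlip _ (hπ t) _ (hπ u) _ (hπ u')).trans
      (mul_le_mul_of_nonneg_left (abs_projIcc_sub_projIcc hrs) hM0))
    (fun t ht => by
      have htc := Ioo_subset_Icc_self ht
      rw [hπid t htc]
      refine (hVdt t htc t htc).congr_of_eventuallyEq ?_
      filter_upwards [hπev t ht] with x hx using by rw [hx])
    (fun t ht => by
      have htc := Ioo_subset_Icc_self ht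
      rw [hπid t htc]
      have h1 := (hVda t htc).comp_hasDerivAt t
        ((ha t htc).hasDerivAt (Icc_mem_nhds ht.1 ht.2))
      refine h1.congr_of_eventuallyEq ?_
      filter_upwards [hπev t ht] with x hx using by simp [hx])
    (fun t ht => hc t (Ioo_subset_Icc_self ht))
    (fun t ht => by simp [π, projIcc_of_right_le hrs ht])
  simpa only [hr, hs] using key

end

/-- **Small-signal state bound** (intermediate conclusion of Khalil, Theorem 5.1):
under the Lyapunov hypotheses with constants c₁,…,c₄, the input perturbation
bound with constant K, the initial condition bound ‖a₀‖ ≤ δ√(c₁/c₂) and the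
small-signal condition on the input, every continuously differentiable solution
of ȧ = N(t, a, f) stays in the ball of radius δ on [0, τ]. -/
theorem ssfg_state_bound
    {n q : ℕ} (D : Set (EuclideanSpace ℝ (Fin n))) (Du : Set (EuclideanSpace ℝ (Fin q)))
    (hD0 : (0 : EuclideanSpace ℝ (Fin n)) ∈ D) (hDu0 : (0 : EuclideanSpace ℝ (Fin q)) ∈ Du)
    (δ ru : ℝ) (hδ : 0 < δ) (hru : 0 < ru)
    (hDδ : {a : EuclideanSpace ℝ (Fin n) | ‖a‖ ≤ δ} ⊆ D)
    (hDuru : {f : EuclideanSpace ℝ (Fin q) | ‖f‖ ≤ ru} ⊆ Du)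
    (N : ℝ → EuclideanSpace ℝ (Fin n) → EuclideanSpace ℝ (Fin q) → EuclideanSpace ℝ (Fin n))
    (V Vt : ℝ → EuclideanSpace ℝ (Fin n) → ℝ)
    (DVa : ℝ → EuclideanSpace ℝ (Fin n) → (EuclideanSpace ℝ (Fin n) →L[ℝ] ℝ))
    (hVdt : ∀ t ∈ Ici (0:ℝ), ∀ a ∈ D, HasDerivAt (fun s => V s a) (Vt t a) t)
    (hVda : ∀ t ∈ Ici (0:ℝ), ∀ a ∈ D, HasFDerivAt (fun b => V t b) (DVa t a) a)
    (c₁ c₂ c₃ c₄ : ℝ) (hc₁ : 0 < c₁) (hc₂ : 0 < c₂) (hc₃ : 0 < c₃) (hc₄ : 0 < c₄)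
    (hVlow : ∀ t ∈ Ici (0:ℝ), ∀ a ∈ D, c₁ * ‖a‖ ^ 2 ≤ V t a)
    (hVhigh : ∀ t ∈ Ici (0:ℝ), ∀ a ∈ D, V t a ≤ c₂ * ‖a‖ ^ 2)
    (hVdecay : ∀ t ∈ Ici (0:ℝ), ∀ a ∈ D, Vt t a + DVa t a (N t a 0) ≤ -c₃ * ‖a‖ ^ 2)
    (hVgrad : ∀ t ∈ Ici (0:ℝ), ∀ a ∈ D, ‖DVa t a‖ ≤ c₄ * ‖a‖)
    (K : ℝ) (hK : 0 ≤ K)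
    (hNlip : ∀ t ∈ Ici (0:ℝ), ∀ a ∈ D, ∀ u ∈ Du, ‖N t a u - N t a 0‖ ≤ K * ‖u‖)
    (τ : ℝ) (hτ : 0 < τ)
    (f : ℝ → EuclideanSpace ℝ (Fin q)) (hfc : Continuous f) (hfmem : ∀ t, f t ∈ Du)
    (a₀ : EuclideanSpace ℝ (Fin n)) (ha₀ : ‖a₀‖ ≤ δ * Real.sqrt (c₁ / c₂))
    (hfsmall : ∀ t ∈ Icc (0:ℝ) τ, ‖f t‖ ≤ min ru (c₁ * c₃ * δ / (c₂ * c₄ * K)))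
    (a : ℝ → EuclideanSpace ℝ (Fin n))
    (hamem : ∀ t ∈ Icc (0:ℝ) τ, a t ∈ D)
    (hode : ∀ t ∈ Icc (0:ℝ) τ, HasDerivWithinAt a (N t (a t) (f t)) (Icc (0:ℝ) τ) t)
    (hcd : ContinuousOn (fun t => N t (a t) (f t)) (Icc (0:ℝ) τ))
    (hinit : a 0 = a₀) :
    ∀ t ∈ Icc (0:ℝ) τ, ‖a t‖ ≤ δ := by
  intro t₁ ht₁
  by_contra! hgt
  have hA : ∀ t ∈ Icc (0:ℝ) τ, t ∈ Ici (0:ℝ) := fun t ht => ht.1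
  have hac : ContinuousOn a (Icc 0 τ) := fun t ht => (hode t ht).continuousWithinAt
  -- comparing the two bounds on `V` at a nonzero point
  have hc12 : c₁ ≤ c₂ := by
    have h1 := (hVlow t₁ ht₁.1 _ (hamem t₁ ht₁)).trans (hVhigh t₁ ht₁.1 _ (hamem t₁ ht₁))
    exact le_of_mul_le_mul_right h1 (pow_pos (hδ.trans hgt) 2)
  set σ := δ * Real.sqrt (c₁ / c₂) with hσ
  have hsq : Real.sqrt (c₁ / c₂) ^ 2 = c₁ / c₂ := Real.sq_sqrt (by positivity)
  have hsq0 : 0 < Real.sqrt (c₁ / c₂) := Real.sqrt_pos.2 (by positivity)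
  have hσ0 : 0 < σ := mul_pos hδ hsq0
  have hσ2 : c₂ * σ ^ 2 = c₁ * δ ^ 2 := by
    rw [hσ, mul_pow, hsq]; field_simp
  have hsq1 : Real.sqrt (c₁ / c₂) ≤ 1 := by
    exact Real.sqrt_le_one.2 ((div_le_one hc₂).2 hc12)
  have hσδ : σ ≤ δ := by
    simpa [hσ] using mul_le_mul_of_nonneg_left hsq1 hδ.le
  have hκσ : c₁ / c₂ * δ ≤ σ := by
    rw [← hsq, hσ]; nlinarith [mul_pos hδ hsq0]
  -- for `K = 0` the right-hand side of the smallness condition is the junk value `0`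
  have hKf : ∀ t ∈ Icc (0:ℝ) τ, c₄ * (K * ‖f t‖) ≤ c₃ * (c₁ / c₂ * δ) := by
    intro t ht
    have h1 := (hfsmall t ht).trans (min_le_right _ _)
    rcases hK.eq_or_lt with h0 | hpos
    · rw [← h0]; simp only [zero_mul, mul_zero]; positivity
    · calc c₄ * (K * ‖f t‖) ≤ c₄ * (K * (c₁ * c₃ * δ / (c₂ * c₄ * K))) := by gcongr
        _ = c₃ * (c₁ / c₂ * δ) := by field_simp
  have hdecay : ∀ t ∈ Icc (0:ℝ) τ, σ ≤ ‖a t‖ →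
      Vt t (a t) + DVa t (a t) (N t (a t) (f t)) ≤ -(c₃ * σ * (σ - c₁ / c₂ * δ)) := by
    intro t ht hta
    have hD := hamem t ht
    have h1 := hVdecay t ht.1 _ hD
    have h2 : DVa t (a t) (N t (a t) (f t) - N t (a t) 0) ≤ ‖a t‖ * (c₃ * (c₁ / c₂ * δ)) :=
      calc DVa t (a t) (N t (a t) (f t) - N t (a t) 0)
          ≤ ‖DVa t (a t)‖ * ‖N t (a t) (f t) - N t (a t) 0‖ :=
            (le_abs_self _).trans ((DVa t (a t)).le_opNorm _)
        _ ≤ (c₄ * ‖a t‖) * (K * ‖f t‖) :=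
            mul_le_mul (hVgrad t ht.1 _ hD) (hNlip t ht.1 _ hD _ (hfmem t)) (norm_nonneg _)
              (by positivity)
        _ = ‖a t‖ * (c₄ * (K * ‖f t‖)) := by ring
        _ ≤ _ := mul_le_mul_of_nonneg_left (hKf t ht) (norm_nonneg _)
    rw [map_sub] at h2
    have h3 : σ * (σ - c₁ / c₂ * δ) ≤ ‖a t‖ * (‖a t‖ - c₁ / c₂ * δ) :=
      mul_le_mul hta (by linarith) (by linarith) (norm_nonneg _)
    have h4 := mul_le_mul_of_nonneg_left h3 hc₃.le
    linarith
  -- the last time before `s` at which the trajectory is in the ball of radius `σ`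
  have hlast : ∀ s ∈ Icc (0:ℝ) τ, σ < ‖a s‖ → ∃ r ∈ Icc (0:ℝ) s, r < s ∧ ‖a r‖ ≤ σ ∧
      ∀ t ∈ Icc r s, σ ≤ ‖a t‖ := by
    intro s hs hss
    have hcs : ContinuousOn (fun t => ‖a t‖) (Icc 0 s) :=
      (hac.mono (Icc_subset_Icc_right hs.2)).norm
    have hcomp : IsCompact (Icc 0 s ∩ (fun t => ‖a t‖) ⁻¹' Iic σ) :=
      isCompact_Icc.of_isClosed_subset
        (hcs.preimage_isClosed_of_isClosed isClosed_Icc isClosed_Iic) inter_subset_left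
    obtain ⟨r, ⟨hr, hrσ⟩, hmax⟩ := hcomp.exists_isGreatest
      ⟨0, left_mem_Icc.2 hs.1, by simpa [hinit] using ha₀⟩
    have hrσ' : ‖a r‖ ≤ σ := hrσ
    have hrlt : r < s := lt_of_le_of_ne hr.2 (by rintro rfl; linarith)
    have hout : ∀ t ∈ Ioc r s, σ ≤ ‖a t‖ := by
      intro t ht
      by_contra! hlt
      exact absurd (hmax ⟨⟨hr.1.trans ht.1.le, ht.2⟩, hlt.le⟩) (not_le.2 ht.1)
    refine ⟨r, hr, hrlt, hrσ', fun t ht => ?_⟩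
    have hcl : IsClosed (Icc r s ∩ (fun t => ‖a t‖) ⁻¹' Ici σ) :=
      (hcs.mono (Icc_subset_Icc_left hr.1)).preimage_isClosed_of_isClosed isClosed_Icc isClosed_Ici
    have hsub : closure (Ioc r s) ⊆ Icc r s ∩ (fun t => ‖a t‖) ⁻¹' Ici σ :=
      closure_minimal (fun x hx => ⟨Ioc_subset_Icc_self hx, hout x hx⟩) hcl
    rw [closure_Ioc hrlt.ne] at hsub
    exact (hsub ht).2
  obtain ⟨B, hB⟩ := isCompact_Icc.exists_bound_of_continuousOn hcd
  obtain ⟨R, hR⟩ := isCompact_Icc.exists_bound_of_continuousOn hac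
  have halip : ∀ u ∈ Icc (0:ℝ) τ, ∀ u' ∈ Icc (0:ℝ) τ, ‖a u - a u'‖ ≤ B * |u - u'| :=
    fun u hu u' hu' => (convex_Icc (0:ℝ) τ).norm_image_sub_le_of_norm_hasDerivWithin_le
      hode hB hu' hu
  have hconcl : ∀ M r s : ℝ, 0 ≤ r → r ≤ s → s ≤ τ → (∀ t ∈ Icc r s, σ ≤ ‖a t‖) →
      (∀ t ∈ Icc r s, ∀ u ∈ Icc r s, ∀ u' ∈ Icc r s,
        |V t (a u) - V t (a u')| ≤ M * |u - u'|) →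
      V s (a s) ≤ V r (a r) + -(c₃ * σ * (σ - c₁ / c₂ * δ)) * (s - r) := by
    intro M r s hr hrs hs hout hlip
    have hsub : Icc r s ⊆ Icc 0 τ := Icc_subset_Icc hr hs
    exact lyapunov_decrease_along hrs
      (fun t ht u hu => hVdt t (hsub ht).1 _ (hamem u (hsub hu)))
      (fun t ht => hVda t (hsub ht).1 _ (hamem t (hsub ht)))
      (fun t ht => (hode t (hsub ht)).mono hsub) hlip
      (fun t ht => hdecay t (hsub ht) (hout t ht))
  rcases hc12.eq_or_lt with heq | hlt
  · -- here `V t x = c₁ ‖x‖²` on `D`, so `V` is Lipschitz along the whole trajectory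
    have hVeq : ∀ t ∈ Icc (0:ℝ) τ, ∀ u ∈ Icc (0:ℝ) τ, V t (a u) = c₁ * ‖a u‖ ^ 2 :=
      fun t ht u hu => le_antisymm (heq ▸ hVhigh t ht.1 _ (hamem u hu))
        (hVlow t ht.1 _ (hamem u hu))
    obtain ⟨r, hr, hrlt, hrσ, hout⟩ := hlast t₁ ht₁ (hσδ.trans_lt hgt)
    have hsub : Icc r t₁ ⊆ Icc 0 τ := Icc_subset_Icc hr.1 ht₁.2
    have h := hconcl (c₁ * (2 * R * B)) r t₁ hr.1 hrlt.le ht₁.2 hout (by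
      intro t ht u hu u' hu'
      rw [hVeq t (hsub ht) u (hsub hu), hVeq t (hsub ht) u' (hsub hu'), ← mul_sub, abs_mul,
        abs_of_pos hc₁, mul_assoc, sq_sub_sq, abs_mul, abs_of_nonneg (by positivity)]
      refine mul_le_mul_of_nonneg_left ?_ hc₁.le
      have h1 := hR u (hsub hu)
      have h2 := hR u' (hsub hu')
      have h3 := (abs_norm_sub_norm_le (a u) (a u')).trans (halip u (hsub hu) u' (hsub hu'))
      calc (‖a u‖ + ‖a u'‖) * |‖a u‖ - ‖a u'‖| ≤ (2 * R) * (B * |u - u'|) :=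
            mul_le_mul (by linarith) h3 (abs_nonneg _) (by linarith [norm_nonneg (a u)])
        _ = _ := by ring)
    have h5 : 0 ≤ c₃ * σ * (σ - c₁ / c₂ * δ) * (t₁ - r) :=
      mul_nonneg (mul_nonneg (by positivity) (by linarith)) (by linarith)
    have h6 := hVlow t₁ ht₁.1 _ (hamem t₁ ht₁)
    have h7 := hVhigh r hr.1 _ (hamem r (hsub (left_mem_Icc.2 hrlt.le)))
    have h8 : c₂ * ‖a r‖ ^ 2 ≤ c₂ * σ ^ 2 := by gcongr
    have h9 : c₁ * δ ^ 2 < c₁ * ‖a t₁‖ ^ 2 := by gcongr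
    linarith
  · have hκσ' : c₁ / c₂ * δ < σ := by
      have : Real.sqrt (c₁ / c₂) < 1 := by
        rw [Real.sqrt_lt' one_pos]; simpa using (div_lt_one hc₂).2 hlt
      rw [← hsq, hσ]; nlinarith [mul_pos hδ hsq0]
    have hσδ' : σ < δ := by
      have : Real.sqrt (c₁ / c₂) < 1 := by
        rw [Real.sqrt_lt' one_pos]; simpa using (div_lt_one hc₂).2 hlt
      rw [hσ]; nlinarith
    -- the first time at which the trajectory reaches the sphere of radius `δ`
    have hcomp : IsCompact (Icc 0 t₁ ∩ (fun t => ‖a t‖) ⁻¹' Ici δ) :=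
      isCompact_Icc.of_isClosed_subset
        ((hac.mono (Icc_subset_Icc_right ht₁.2)).norm.preimage_isClosed_of_isClosed
          isClosed_Icc isClosed_Ici) inter_subset_left
    obtain ⟨s, ⟨hs, hsδ⟩, hmin⟩ := hcomp.exists_isLeast ⟨t₁, right_mem_Icc.2 ht₁.1, hgt.le⟩
    have hsδ' : δ ≤ ‖a s‖ := hsδ
    have hsτ : s ∈ Icc 0 τ := ⟨hs.1, hs.2.trans ht₁.2⟩
    have hs0 : 0 < s := lt_of_le_of_ne hs.1 (by rintro rfl; rw [hinit] at hsδ'; linarith)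
    have hin : ∀ t ∈ Icc 0 s, ‖a t‖ ≤ δ := by
      have hcl : IsClosed (Icc 0 s ∩ (fun t => ‖a t‖) ⁻¹' Iic δ) :=
        (hac.mono (Icc_subset_Icc_right hsτ.2)).norm.preimage_isClosed_of_isClosed
          isClosed_Icc isClosed_Iic
      have hsub : closure (Ico 0 s) ⊆ Icc 0 s ∩ (fun t => ‖a t‖) ⁻¹' Iic δ := by
        refine closure_minimal (fun x hx => ⟨Ico_subset_Icc_self hx, ?_⟩) hcl
        by_contra hnot
        have hge : δ ≤ ‖a x‖ := le_of_not_ge (show ¬ ‖a x‖ ≤ δ from hnot)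
        exact absurd (hmin ⟨⟨hx.1, hx.2.le.trans hs.2⟩, hge⟩) (not_le.2 hx.2)
      rw [closure_Ico hs0.ne] at hsub
      exact fun t ht => (hsub ht).2
    obtain ⟨r, hr, hrlt, hrσ, hout⟩ := hlast s hsτ (hσδ'.trans_le hsδ')
    have hsub : Icc r s ⊆ Icc 0 τ := Icc_subset_Icc hr.1 hsτ.2
    have hVlip : ∀ t ∈ Ici (0:ℝ), ∀ x ∈ Metric.closedBall (0 : EuclideanSpace ℝ (Fin n)) δ,
        ∀ y ∈ Metric.closedBall (0 : EuclideanSpace ℝ (Fin n)) δ,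
        ‖V t x - V t y‖ ≤ c₄ * δ * ‖x - y‖ := by
      intro t ht x hx y hy
      refine (convex_closedBall _ _).norm_image_sub_le_of_norm_hasFDerivWithin_le (𝕜 := ℝ)
        (f' := DVa t)
        (fun z hz => (hVda t ht z (hDδ (by simpa using hz))).hasFDerivWithinAt)
        (fun z hz => ?_) hy hx
      have hz' : ‖z‖ ≤ δ := by simpa using hz
      exact (hVgrad t ht z (hDδ hz')).trans (by gcongr)
    have h := hconcl (c₄ * δ * B) r s hr.1 hrlt.le hsτ.2 hout (by
      intro t ht u hu u' hu'
      have hb : ∀ v ∈ Icc r s, a v ∈ Metric.closedBall (0 : EuclideanSpace ℝ (Fin n)) δ :=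
        fun v hv => by simpa using hin v ⟨hr.1.trans hv.1, hv.2⟩
      have h1 := hVlip t (hsub ht).1 _ (hb u hu) _ (hb u' hu')
      rw [mul_assoc]
      exact h1.trans (mul_le_mul_of_nonneg_left (halip u (hsub hu) u' (hsub hu'))
        (by positivity)))
    have h5 : 0 < c₃ * σ * (σ - c₁ / c₂ * δ) * (s - r) :=
      mul_pos (mul_pos (by positivity) (by linarith)) (by linarith)
    have h6 := hVlow s hs.1 _ (hamem s hsτ)
    have h7 := hVhigh r hr.1 _ (hamem r (hsub (left_mem_Icc.2 hrlt.le)))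
    have h8 : c₂ * ‖a r‖ ^ 2 ≤ c₂ * σ ^ 2 := by gcongr
    have h9 : c₁ * δ ^ 2 ≤ c₁ * ‖a s‖ ^ 2 := by gcongr
    linarith
end
end

section
/- Under the stated hypotheses (Lyapunov conditions with constants c₁, c₂, c₃, c₄, input bound with constant K, output bound with constants η₁, η₂, initial condition ‖a₀‖ ≤ δ√(c₁/c₂), and input satisfying sup_{0≤t≤τ} ‖f(t)‖ ≤ min{r_u, c₁c₃δ/(c₂c₄K)}), the truncated output y_τ of the system satisfies ‖y_τ‖_{L∞} ≤ γ‖f_τ‖_{L∞} + β, where γ = η₂ + η₁c₂c₄K/(c₁c₃) and β = η₁‖a₀‖√(c₂/c₁). -/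
/-!
The storage function `W t = V t (a t)` should satisfy
`W' ≤ -c₃ ‖a‖² + c₄ K ‖f‖ ‖a‖`, so that `W` cannot grow above the level `c₂ (c₄ K sup ‖f‖ / c₃)²`.
This gives `c₁ ‖a t‖² ≤ W t ≤ max (c₂ ‖a₀‖²) (c₂ (c₄ K sup ‖f‖ / c₃)²)`, and the output bound follows
because `c₁ ≤ c₂`.

The hypotheses provide only the partial derivatives of `V`, with no joint continuity, so the chain
rule for `W` is not available and `W` need not be differentiable. The replacement is `diag_sub_le`:
a bound on the sum of the partial derivatives still bounds the increments of a *continuous* diagonal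
`t ↦ Φ t t`. The time interval is cut into countably many sets on each of which both difference
quotients converge uniformly, so that the increment bound holds on each set up to `ε`; by the Baire
argument of `antitone_of_countable_cover` it then holds on the whole interval. The comparison
principle `diag_le_max` follows.

Continuity of `W` is only clear while `‖a t‖ ≤ δ`, where `V t` is Lipschitz uniformly in `t`. If
`c₁ < c₂`, then `W` decays at a positive rate near the level `c₁ δ²`, so it stays strictly below this
level at positive times and the trajectory never reaches the sphere of radius `δ`. If `c₁ = c₂`, then
`V t a = c₁ ‖a‖²` on `D`, so `W` is continuous anyway. If `c₁ > c₂`, then `D = {0}`.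
-/

noncomputable section

open Set MeasureTheory

open Filter Topology

theorem antitoneOn_closure_of_continuous {G : ℝ → ℝ} (hG : Continuous G) {E : Set ℝ}
    (hE : AntitoneOn G E) : AntitoneOn G (closure E) := by
  intro x hx y hy hxy
  rcases hxy.eq_or_lt with rfl | hlt
  · exact le_rfl
  obtain ⟨u, hu, hux⟩ := mem_closure_iff_seq_limit.1 hx
  obtain ⟨v, hv, hvy⟩ := mem_closure_iff_seq_limit.1 hy
  refine le_of_tendsto_of_tendsto ((hG.tendsto y).comp hvy) ((hG.tendsto x).comp hux) ?_
  filter_upwards [hux.eventually_lt hvy hlt] with k hk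
  exact hE (hu k) (hv k) hk.le

/-- Local antitonicity on the open interval suffices: every right slope there is eventually
nonpositive, and continuity adds the left end point. -/
theorem le_of_locally_antitone {G : ℝ → ℝ} (hG : Continuous G) {s t : ℝ} (hst : s < t)
    (hloc : ∀ x ∈ Ioo s t, ∃ ε > 0, AntitoneOn G (Metric.ball x ε)) : G t ≤ G s := by
  have key : ∀ s' ∈ Ioo s t, G t ≤ G s' := by
    intro s' hs'
    refine image_le_of_liminf_slope_right_le_deriv_boundary (f := G) (a := s') (b := t)
      (B := fun _ => G s') (B' := fun _ => 0) hG.continuousOn le_rfl continuousOn_const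
      (fun x _ => hasDerivWithinAt_const _ _ _) ?_ (right_mem_Icc.2 hs'.2.le)
    intro x hx r hr
    obtain ⟨ε, hε, han⟩ := hloc x ⟨hs'.1.trans_le hx.1, hx.2⟩
    apply Eventually.frequently
    have h1 : Metric.ball x ε ∈ 𝓝[>] x := mem_nhdsWithin_of_mem_nhds (Metric.ball_mem_nhds x hε)
    filter_upwards [h1, self_mem_nhdsWithin] with z hz hxz
    have hxz' : x < z := hxz
    refine lt_of_le_of_lt ?_ hr
    rw [slope_def_field]
    exact div_nonpos_of_nonpos_of_nonneg
      (sub_nonpos.2 (han (Metric.mem_ball_self hε) hz hxz'.le)) (sub_nonneg.2 hxz'.le)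
  have ht : Tendsto G (𝓝[>] s) (𝓝 (G s)) := (hG.tendsto s).mono_left nhdsWithin_le_nhds
  refine ge_of_tendsto ht ?_
  filter_upwards [Ioo_mem_nhdsGT hst] with z hz using key z hz

/-- A continuous function that is antitone on each of countably many sets covering `ℝ` is antitone.
The sets may be taken closed. If the closed set `Uᶜ` of points near which `G` is not antitone were
nonempty, Baire's theorem would give a ball on which `Uᶜ` lies in one of the covering sets. There `G`
is antitone along `Uᶜ` and along each gap of `Uᶜ`, hence on the whole ball: a contradiction. -/
theorem antitone_of_countable_cover {G : ℝ → ℝ} (hG : Continuous G) {ι : Type*} [Countable ι]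
    (E : ι → Set ℝ) (hcov : ∀ x, ∃ i, x ∈ E i) (hE : ∀ i, AntitoneOn G (E i)) : Antitone G := by
  set U : Set ℝ := {x | ∃ ε > 0, AntitoneOn G (Metric.ball x ε)} with hU
  have hUo : IsOpen U := by
    rw [Metric.isOpen_iff]
    rintro x ⟨ε, hε, han⟩
    refine ⟨ε, hε, fun y hy => ?_⟩
    obtain ⟨r, hr, hsub⟩ := Metric.isOpen_iff.1 Metric.isOpen_ball y hy
    exact ⟨r, hr, han.mono hsub⟩
  suffices hall : ∀ x, x ∈ U by
    intro x y hxy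
    rcases hxy.eq_or_lt with rfl | hlt
    · exact le_rfl
    · exact le_of_locally_antitone hG hlt fun z _ => hall z
  by_contra! hne
  obtain ⟨x₀, hx₀⟩ := hne
  have hPc : IsClosed Uᶜ := hUo.isClosed_compl
  have : CompleteSpace (Uᶜ : Set ℝ) := hPc.completeSpace_coe
  have : Nonempty (Uᶜ : Set ℝ) := ⟨⟨x₀, hx₀⟩⟩
  obtain ⟨i, ⟨⟨x, hxP⟩, hxi⟩⟩ := nonempty_interior_of_iUnion_of_closed
    (f := fun i => ((↑) : (Uᶜ : Set ℝ) → ℝ) ⁻¹' closure (E i))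
    (fun i => isClosed_closure.preimage continuous_subtype_val)
    (by
      refine eq_univ_of_forall fun z => ?_
      obtain ⟨i, hi⟩ := hcov z
      exact mem_iUnion.2 ⟨i, subset_closure hi⟩)
  rw [mem_interior_iff_mem_nhds, Metric.mem_nhds_iff] at hxi
  obtain ⟨ε, hε, hball⟩ := hxi
  have hsub : ∀ z ∈ Metric.ball x ε, z ∉ U → z ∈ closure (E i) := fun z hz hzU =>
    hball (show (⟨z, hzU⟩ : (Uᶜ : Set ℝ)) ∈ Metric.ball _ ε from hz)
  have hcl := antitoneOn_closure_of_continuous hG (hE i)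
  refine hxP ⟨ε, hε, ?_⟩
  intro s hs t ht hst
  have hIcc : Icc s t ⊆ Metric.ball x ε := by
    rw [Real.ball_eq_Ioo] at hs ht ⊢
    exact fun z hz => ⟨hs.1.trans_le hz.1, hz.2.trans_lt ht.2⟩
  have gap : ∀ u v, u ≤ v → (∀ z ∈ Ioo u v, z ∈ U) → G v ≤ G u := by
    intro u v huv hz
    rcases huv.eq_or_lt with rfl | hlt
    · exact le_rfl
    · exact le_of_locally_antitone hG hlt hz
  by_cases hemp : (Icc s t ∩ Uᶜ).Nonempty
  · have hcomp : IsCompact (Icc s t ∩ Uᶜ) := isCompact_Icc.inter_right hPc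
    obtain ⟨l, hl, hlmin⟩ := hcomp.exists_isLeast hemp
    obtain ⟨m, hm, hmmax⟩ := hcomp.exists_isGreatest hemp
    have h1 : G l ≤ G s := gap s l hl.1.1 fun z hz => by
      by_contra hzU
      exact absurd (hlmin ⟨⟨hz.1.le, hz.2.le.trans hl.1.2⟩, hzU⟩) (not_le.2 hz.2)
    have h2 : G m ≤ G l :=
      hcl (hsub l (hIcc hl.1) hl.2) (hsub m (hIcc hm.1) hm.2) (hlmin hm)
    have h3 : G t ≤ G m := gap m t hm.1.2 fun z hz => by
      by_contra hzU
      exact absurd (hmmax ⟨⟨hm.1.1.trans hz.1.le, hz.2.le⟩, hzU⟩) (not_le.2 hz.1)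
    exact h3.trans (h2.trans h1)
  · refine gap s t hst fun z hz => ?_
    by_contra hzU
    exact hemp ⟨z, ⟨hz.1.le, hz.2.le⟩, hzU⟩

theorem antitoneOn_Icc_of_countable_cover {G : ℝ → ℝ} {α β : ℝ} (hαβ : α ≤ β)
    (hG : ContinuousOn G (Icc α β)) {ι : Type*} [Countable ι]
    (E : ι → Set ℝ) (hcov : ∀ x ∈ Icc α β, ∃ i, x ∈ E i)
    (hE : ∀ i, AntitoneOn G (E i ∩ Icc α β)) : AntitoneOn G (Icc α β) := by
  have hcont : Continuous (IccExtend hαβ ((Icc α β).domRestrict G)) :=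
    (continuousOn_iff_continuous_domRestrict.1 hG).Icc_extend'
  have := antitone_of_countable_cover hcont
    (fun i => {x | (projIcc α β hαβ x : ℝ) ∈ E i})
    (fun x => hcov _ (projIcc α β hαβ x).2)
    (fun i x hx y hy hxy => hE i ⟨hx, (projIcc α β hαβ x).2⟩ ⟨hy, (projIcc α β hαβ y).2⟩
      (monotone_projIcc hαβ hxy))
  intro x hx y hy hxy
  have h := this hxy
  rwa [IccExtend_of_mem hαβ _ hx, IccExtend_of_mem hαβ _ hy] at h

/-- One-sided chain rule along the diagonal for a function `Φ` that is only separately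
differentiable. No joint differentiability is available, so `t ↦ Φ t t` need not be differentiable;
but when the sum of the partial derivatives on the diagonal is at most `-c`, its increments are
bounded as if the chain rule held. -/
theorem diag_sub_le {Φ : ℝ → ℝ → ℝ} {p w : ℝ → ℝ} {α β c : ℝ} (hαβ : α ≤ β)
    (hW : ContinuousOn (fun t => Φ t t) (Icc α β))
    (hp : ∀ t ∈ Icc α β, HasDerivWithinAt (fun s => Φ s t) (p t) (Icc α β) t)
    (hw : ∀ t ∈ Icc α β, HasDerivWithinAt (fun s => Φ t s) (w t) (Icc α β) t)
    (hpw : ∀ t ∈ Icc α β, p t + w t ≤ -c) : Φ β β ≤ Φ α α - c * (β - α) := by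
  suffices hε : ∀ ε > 0, Φ β β ≤ Φ α α - c * (β - α) + ε by
    exact le_of_forall_pos_le_add hε
  suffices hε : ∀ ε > 0, Φ β β + (c - 3 * ε) * β ≤ Φ α α + (c - 3 * ε) * α by
    intro ε he
    have hpos : 0 < 3 * (β - α + 1) := by linarith
    have h1 := hε (ε / (3 * (β - α + 1))) (by positivity)
    have h2 : 3 * (ε / (3 * (β - α + 1))) * (β - α) ≤ ε := by
      rw [mul_div_assoc', div_mul_eq_mul_div, div_le_iff₀ hpos]
      nlinarith
    nlinarith
  intro ε he
  -- On one piece the difference quotients of both partial derivatives converge at a common rate,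
  -- `w` oscillates by at most `ε`, and any two points are closer than that rate's scale.
  let E : ℕ × ℤ × ℤ → Set ℝ := fun i => {t |
    (∀ s ∈ Icc α β, |s - t| < 1 / (i.1 + 1 : ℝ) →
      |Φ s t - Φ t t - (s - t) * p t| ≤ ε * |s - t| ∧
      |Φ t s - Φ t t - (s - t) * w t| ≤ ε * |s - t|) ∧
    ⌊w t / ε⌋ = i.2.1 ∧ ⌊t * (i.1 + 1 : ℝ)⌋ = i.2.2}
  refine antitoneOn_Icc_of_countable_cover (G := fun t => Φ t t + (c - 3 * ε) * t) hαβ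
    (hW.add (by fun_prop)) E ?_ ?_ (left_mem_Icc.2 hαβ) (right_mem_Icc.2 hαβ) hαβ
  · intro t ht
    have h1 := (hasDerivWithinAt_iff_isLittleO.1 (hp t ht)).def he
    have h2 := (hasDerivWithinAt_iff_isLittleO.1 (hw t ht)).def he
    obtain ⟨r, hr, hball⟩ := Metric.mem_nhdsWithin_iff.1 (h1.and h2)
    obtain ⟨k, hk⟩ := exists_nat_one_div_lt hr
    refine ⟨(k, ⌊w t / ε⌋, ⌊t * (k + 1 : ℝ)⌋), ?_, rfl, rfl⟩
    intro s hs hst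
    have := hball ⟨show dist s t < r by rw [Real.dist_eq]; exact hst.trans hk, hs⟩
    simpa only [mem_ofPred_eq, smul_eq_mul, Real.norm_eq_abs] using this
  · rintro ⟨k, j, l⟩ t ⟨⟨htE, htw, htl⟩, ht⟩ u ⟨⟨huE, huw, hul⟩, hu⟩ htu
    dsimp only at htE htw htl huE huw hul ⊢
    have hk : (0:ℝ) < k + 1 := by positivity
    have hdist : u - t < 1 / (k + 1 : ℝ) := by
      have := Int.abs_sub_lt_one_of_floor_eq_floor (hul.trans htl.symm)
      rw [← sub_mul] at this
      rw [lt_div_iff₀ hk]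
      exact (le_abs_self _).trans_lt this
    have hww : w u - w t ≤ ε := by
      have := (le_abs_self _).trans (Int.abs_sub_lt_one_of_floor_eq_floor (huw.trans htw.symm)).le
      rwa [← sub_div, div_le_one he] at this
    have habs : |u - t| = u - t := abs_of_nonneg (sub_nonneg.2 htu)
    -- `Φ u u - Φ t t` splits at the corner `Φ u t`: the first variable is expanded at `(t, t)`,
    -- the second at `(u, u)`.
    have h1 := (abs_le.1 (htE u hu (by rwa [habs])).1).2
    have h2 := (abs_le.1 (huE t ht (by rwa [abs_sub_comm, habs])).2).1
    rw [habs] at h1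
    rw [abs_sub_comm, habs] at h2
    have h3 := mul_le_mul_of_nonneg_left (hpw t ht) (sub_nonneg.2 htu)
    have h4 := mul_le_mul_of_nonneg_left hww (sub_nonneg.2 htu)
    linarith

/-- Comparison principle: if the diagonal of `Φ` decays at rate `c` while it exceeds `B`, then it
never exceeds `B` except on an initial stretch, where it lies below `Φ 0 0 - c t`. -/
theorem diag_le_max {Φ : ℝ → ℝ → ℝ} {p w : ℝ → ℝ} {T B c : ℝ} (hc : 0 ≤ c)
    (hW : ContinuousOn (fun t => Φ t t) (Icc 0 T))
    (hp : ∀ t ∈ Icc 0 T, HasDerivWithinAt (fun s => Φ s t) (p t) (Icc 0 T) t)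
    (hw : ∀ t ∈ Icc 0 T, HasDerivWithinAt (fun s => Φ t s) (w t) (Icc 0 T) t)
    (hpw : ∀ t ∈ Icc 0 T, B < Φ t t → p t + w t ≤ -c) {t : ℝ} (ht : t ∈ Icc 0 T) :
    Φ t t ≤ max (Φ 0 0 - c * t) B := by
  by_contra! hcon
  obtain ⟨h1, h2⟩ := max_lt_iff.1 hcon
  have step : ∀ s ∈ Icc 0 t, (∀ u ∈ Icc s t, B < Φ u u) → Φ t t ≤ Φ s s - c * (t - s) := by
    intro s hs hu
    have hsub : Icc s t ⊆ Icc 0 T := Icc_subset_Icc hs.1 ht.2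
    exact diag_sub_le hs.2 (hW.mono hsub) (fun u hu => (hp u (hsub hu)).mono hsub)
      (fun u hu => (hw u (hsub hu)).mono hsub) (fun u hv => hpw u (hsub hv) (hu u hv))
  have hWt : ContinuousOn (fun t => Φ t t) (Icc 0 t) := hW.mono (Icc_subset_Icc le_rfl ht.2)
  by_cases hne : ({u ∈ Icc 0 t | Φ u u ≤ B}).Nonempty
  · have hcl : IsClosed {u ∈ Icc 0 t | Φ u u ≤ B} :=
      isClosed_Icc.isClosed_le hWt continuousOn_const
    have hcomp : IsCompact {u ∈ Icc 0 t | Φ u u ≤ B} :=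
      isCompact_Icc.of_isClosed_subset hcl (sep_subset _ _)
    -- `m` is the last time at which the diagonal is at most `B`.
    obtain ⟨m, hm, hmax⟩ := hcomp.exists_isGreatest hne
    have hmt : m < t := lt_of_le_of_ne hm.1.2 (by rintro rfl; exact absurd hm.2 (not_le.2 h2))
    have hle : ∀ s ∈ Ioo m t, Φ t t ≤ Φ s s := by
      intro s hs
      have := step s ⟨hm.1.1.trans hs.1.le, hs.2.le⟩ fun u hu => by
        by_contra! hB
        exact absurd (hmax ⟨⟨hm.1.1.trans (hs.1.le.trans hu.1), hu.2⟩, hB⟩)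
          (not_le.2 (hs.1.trans_le hu.1))
      nlinarith [mul_nonneg hc (sub_nonneg.2 hs.2.le)]
    have hlim : Tendsto (fun u => Φ u u) (𝓝[Ioo m t] m) (𝓝 (Φ m m)) :=
      (hWt m hm.1).mono (Ioo_subset_Icc_self.trans (Icc_subset_Icc hm.1.1 le_rfl))
    have : (𝓝[Ioo m t] m).NeBot := left_nhdsWithin_Ioo_neBot hmt
    have : Φ t t ≤ Φ m m := ge_of_tendsto hlim (by
      filter_upwards [self_mem_nhdsWithin] with s hs using hle s hs)
    exact absurd (this.trans hm.2) (not_le.2 h2)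
  · have := step 0 ⟨le_rfl, ht.1⟩ fun u hu => by
      by_contra! hB
      exact hne ⟨u, hu, hB⟩
    rw [sub_zero] at this
    linarith

/-- A function differentiable in time, with state gradient bounded on the ball of radius `δ`, is
continuous along any continuous curve in that ball. -/
theorem continuousOn_along_curve {n : ℕ} {δ C T : ℝ} {V Vt : ℝ → EuclideanSpace ℝ (Fin n) → ℝ}
    {DVa : ℝ → EuclideanSpace ℝ (Fin n) → (EuclideanSpace ℝ (Fin n) →L[ℝ] ℝ)}
    (hVdt : ∀ t ∈ Ici (0:ℝ), ∀ a, ‖a‖ ≤ δ → HasDerivAt (fun s => V s a) (Vt t a) t)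
    (hVda : ∀ t ∈ Ici (0:ℝ), ∀ a, ‖a‖ ≤ δ → HasFDerivAt (fun b => V t b) (DVa t a) a)
    (hVgrad : ∀ t ∈ Ici (0:ℝ), ∀ a, ‖a‖ ≤ δ → ‖DVa t a‖ ≤ C)
    {a : ℝ → EuclideanSpace ℝ (Fin n)} (ha : ContinuousOn a (Icc 0 T))
    (haδ : ∀ t ∈ Icc 0 T, ‖a t‖ ≤ δ) : ContinuousOn (fun t => V t (a t)) (Icc 0 T) := by
  have h := continuousOn_prod_of_continuousOn_lipschitzOnWith
    (fun x : EuclideanSpace ℝ (Fin n) × ℝ => V x.2 x.1)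
    (s := Metric.closedBall 0 δ) (t := Ici 0) C.toNNReal
    (fun b hb t ht => (hVdt t ht b (mem_closedBall_zero_iff.1 hb)).continuousAt.continuousWithinAt)
    (fun t ht => Convex.lipschitzOnWith_of_nnnorm_hasFDerivWithin_le (𝕜 := ℝ) (f' := DVa t)
      (fun b hb => (hVda t ht b (mem_closedBall_zero_iff.1 hb)).hasFDerivWithinAt)
      (fun b hb => by
        rw [← NNReal.coe_le_coe, coe_nnnorm]
        exact (hVgrad t ht b (mem_closedBall_zero_iff.1 hb)).trans (Real.le_coe_toNNReal C))
      (convex_closedBall 0 δ))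
  exact h.comp (f := fun t => (a t, t)) (ha.prodMk continuousOn_id)
    fun t ht => ⟨mem_closedBall_zero_iff.2 (haδ t ht), ht.1⟩

/-- **Small-signal finite-gain L∞ bound** (Khalil, Theorem 5.1, case p = ∞):
the truncated output satisfies ‖y_τ‖_{L∞} ≤ γ‖f_τ‖_{L∞} + β with
γ = η₂ + η₁c₂c₄K/(c₁c₃) and β = η₁‖a₀‖√(c₂/c₁). -/
theorem ssfg_Linf_gain
    {n q : ℕ} (D : Set (EuclideanSpace ℝ (Fin n))) (Du : Set (EuclideanSpace ℝ (Fin q)))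
    (hD0 : (0 : EuclideanSpace ℝ (Fin n)) ∈ D) (hDu0 : (0 : EuclideanSpace ℝ (Fin q)) ∈ Du)
    (δ ru : ℝ) (hδ : 0 < δ) (hru : 0 < ru)
    (hDδ : {a : EuclideanSpace ℝ (Fin n) | ‖a‖ ≤ δ} ⊆ D)
    (hDuru : {f : EuclideanSpace ℝ (Fin q) | ‖f‖ ≤ ru} ⊆ Du)
    (N : ℝ → EuclideanSpace ℝ (Fin n) → EuclideanSpace ℝ (Fin q) → EuclideanSpace ℝ (Fin n))
    (V Vt : ℝ → EuclideanSpace ℝ (Fin n) → ℝ)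
    (DVa : ℝ → EuclideanSpace ℝ (Fin n) → (EuclideanSpace ℝ (Fin n) →L[ℝ] ℝ))
    (hVdt : ∀ t ∈ Ici (0:ℝ), ∀ a ∈ D, HasDerivAt (fun s => V s a) (Vt t a) t)
    (hVda : ∀ t ∈ Ici (0:ℝ), ∀ a ∈ D, HasFDerivAt (fun b => V t b) (DVa t a) a)
    (c₁ c₂ c₃ c₄ : ℝ) (hc₁ : 0 < c₁) (hc₂ : 0 < c₂) (hc₃ : 0 < c₃) (hc₄ : 0 < c₄)
    (hVlow : ∀ t ∈ Ici (0:ℝ), ∀ a ∈ D, c₁ * ‖a‖ ^ 2 ≤ V t a)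
    (hVhigh : ∀ t ∈ Ici (0:ℝ), ∀ a ∈ D, V t a ≤ c₂ * ‖a‖ ^ 2)
    (hVdecay : ∀ t ∈ Ici (0:ℝ), ∀ a ∈ D, Vt t a + DVa t a (N t a 0) ≤ -c₃ * ‖a‖ ^ 2)
    (hVgrad : ∀ t ∈ Ici (0:ℝ), ∀ a ∈ D, ‖DVa t a‖ ≤ c₄ * ‖a‖)
    (K : ℝ) (hK : 0 ≤ K)
    (hNlip : ∀ t ∈ Ici (0:ℝ), ∀ a ∈ D, ∀ u ∈ Du, ‖N t a u - N t a 0‖ ≤ K * ‖u‖)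
    (h : ℝ → EuclideanSpace ℝ (Fin n) → EuclideanSpace ℝ (Fin q) → EuclideanSpace ℝ (Fin n))
    (η₁ η₂ : ℝ) (hη₁ : 0 ≤ η₁) (hη₂ : 0 ≤ η₂)
    (hout : ∀ t ∈ Ici (0:ℝ), ∀ a ∈ D, ∀ u ∈ Du, ‖h t a u‖ ≤ η₁ * ‖a‖ + η₂ * ‖u‖)
    (τ : ℝ) (hτ : 0 < τ)
    (f : ℝ → EuclideanSpace ℝ (Fin q)) (hfc : Continuous f) (hfmem : ∀ t, f t ∈ Du)
    (a₀ : EuclideanSpace ℝ (Fin n)) (ha₀ : ‖a₀‖ ≤ δ * Real.sqrt (c₁ / c₂))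
    (hfsmall : ∀ t ∈ Icc (0:ℝ) τ, ‖f t‖ ≤ min ru (c₁ * c₃ * δ / (c₂ * c₄ * K)))
    (a : ℝ → EuclideanSpace ℝ (Fin n))
    (hamem : ∀ t ∈ Icc (0:ℝ) τ, a t ∈ D)
    (hode : ∀ t ∈ Icc (0:ℝ) τ, HasDerivWithinAt a (N t (a t) (f t)) (Icc (0:ℝ) τ) t)
    (hcd : ContinuousOn (fun t => N t (a t) (f t)) (Icc (0:ℝ) τ))
    (hinit : a 0 = a₀) :
    LinfNorm (trunc τ (fun t => h t (a t) (f t))) ≤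
      (η₂ + η₁ * c₂ * c₄ * K / (c₁ * c₃)) * LinfNorm (trunc τ f)
        + η₁ * ‖a₀‖ * Real.sqrt (c₂ / c₁) := by
  set w : ℝ → ℝ := fun t => DVa t (a t) (N t (a t) (f t)) with hw_def
  have hacont : ContinuousOn a (Icc 0 τ) := fun t ht => (hode t ht).continuousWithinAt
  have hWp : ∀ t ∈ Icc 0 τ, HasDerivWithinAt (fun s => V s (a t)) (Vt t (a t)) (Icc 0 τ) t :=
    fun t ht => (hVdt t ht.1 _ (hamem t ht)).hasDerivWithinAt
  have hWw : ∀ t ∈ Icc 0 τ, HasDerivWithinAt (fun s => V t (a s)) (w t) (Icc 0 τ) t :=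
    fun t ht => (hVda t ht.1 _ (hamem t ht)).comp_hasDerivWithinAt t (hode t ht)
  have hpw : ∀ t ∈ Icc 0 τ,
      Vt t (a t) + w t ≤ -c₃ * ‖a t‖ ^ 2 + c₄ * ‖a t‖ * (K * ‖f t‖) := by
    intro t ht
    have hD := hamem t ht
    have h1 := hVdecay t ht.1 _ hD
    have h2 : w t = DVa t (a t) (N t (a t) 0) + DVa t (a t) (N t (a t) (f t) - N t (a t) 0) := by
      rw [← map_add, add_sub_cancel]
    have h3 : DVa t (a t) (N t (a t) (f t) - N t (a t) 0) ≤ c₄ * ‖a t‖ * (K * ‖f t‖) :=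
      (le_abs_self _).trans (((DVa t (a t)).le_opNorm _).trans
        (mul_le_mul (hVgrad t ht.1 _ hD) (hNlip t ht.1 _ hD _ (hfmem t)) (norm_nonneg _)
          (by positivity)))
    linarith
  -- For `K = 0` the quotient in the smallness assumption is `0` by convention; the product form
  -- holds in every case.
  have hfK : ∀ t ∈ Icc 0 τ, c₄ * (K * ‖f t‖) ≤ c₃ * (c₁ / c₂ * δ) := by
    intro t ht
    rcases hK.eq_or_lt with h0 | hpos
    · rw [← h0]; simp only [zero_mul, mul_zero]; positivity
    · have h1 := (hfsmall t ht).trans (min_le_right _ _)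
      rw [le_div_iff₀ (by positivity)] at h1
      have h2 : c₃ * (c₁ / c₂ * δ) = c₁ * c₃ * δ / c₂ := by ring
      rw [h2, le_div_iff₀ hc₂]
      linarith
  have h0τ : (0:ℝ) ∈ Icc 0 τ := left_mem_Icc.2 hτ.le
  have hW0 : V 0 (a 0) ≤ c₂ * ‖a₀‖ ^ 2 := hinit ▸ hVhigh 0 h0τ.1 _ (hamem 0 h0τ)
  have ha₀sq : ‖a₀‖ ^ 2 ≤ δ ^ 2 * (c₁ / c₂) := by
    have := pow_le_pow_left₀ (norm_nonneg _) ha₀ 2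
    rwa [mul_pow, Real.sq_sqrt (by positivity)] at this
  have hcontBall : ∀ T ≤ τ, (∀ t ∈ Icc 0 T, ‖a t‖ ≤ δ) →
      ContinuousOn (fun t => V t (a t)) (Icc 0 T) := fun T hT hle =>
    continuousOn_along_curve (C := c₄ * δ)
      (fun t ht b hb => hVdt t ht b (hDδ hb)) (fun t ht b hb => hVda t ht b (hDδ hb))
      (fun t ht b hb => (hVgrad t ht b (hDδ hb)).trans (by gcongr))
      (hacont.mono (Icc_subset_Icc le_rfl hT)) hle
  have hstay : c₁ < c₂ → ∀ t ∈ Icc 0 τ, ‖a t‖ < δ := by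
    intro hlt
    by_contra! hex
    set k := c₁ / c₂ with hk
    have hk0 : 0 < k := by positivity
    have hk1 : k < 1 := (div_lt_one hc₂).2 hlt
    have hck : c₁ = c₂ * k := by rw [hk]; field_simp
    -- A radius `r δ` strictly between `k δ`, beyond which `W` decays, and `√k δ`.
    set r := Real.sqrt (k * (k + 1) / 2) with hr
    have hr2 : r ^ 2 = k * (k + 1) / 2 := Real.sq_sqrt (by positivity)
    have hkr : k < r := Real.lt_sqrt_of_sq_lt (by nlinarith)
    have hr0 : 0 < r := hk0.trans hkr
    -- The first time the trajectory reaches norm `δ`.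
    have hcl : IsClosed {t ∈ Icc 0 τ | δ ≤ ‖a t‖} :=
      isClosed_Icc.isClosed_le continuousOn_const hacont.norm
    obtain ⟨t₁, ht₁, ht₁δ⟩ := hex
    obtain ⟨T, hT, hTmin⟩ :=
      (isCompact_Icc.of_isClosed_subset hcl (sep_subset _ _)).exists_isLeast ⟨t₁, ht₁, ht₁δ⟩
    have hbefore : ∀ t ∈ Ico 0 T, ‖a t‖ ≤ δ := by
      intro t ht
      by_contra! hgt
      exact absurd (hTmin ⟨⟨ht.1, ht.2.le.trans hT.1.2⟩, hgt.le⟩) (not_le.2 ht.2)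
    have hT0 : 0 < T := by
      refine lt_of_le_of_ne hT.1.1 fun h0 => ?_
      have h1 : δ ≤ ‖a₀‖ := by rw [← hinit, h0]; exact hT.2
      have h2 := pow_le_pow_left₀ hδ.le h1 2
      nlinarith [pow_pos hδ 2]
    have hTδ : ‖a T‖ ≤ δ := by
      have hcl' : T ∈ closure (Ico 0 T) := by
        rw [closure_Ico hT0.ne]; exact right_mem_Icc.2 hT0.le
      exact ContinuousWithinAt.closure_le hcl'
        ((hacont.norm T hT.1).mono (Ico_subset_Icc_self.trans (Icc_subset_Icc le_rfl hT.1.2)))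
        continuousWithinAt_const hbefore
    have hle : ∀ t ∈ Icc 0 T, ‖a t‖ ≤ δ := fun t ht =>
      ht.2.eq_or_lt.elim (fun h => h ▸ hTδ) (fun h => hbefore t ⟨ht.1, h⟩)
    have hsub : Icc 0 T ⊆ Icc 0 τ := Icc_subset_Icc le_rfl hT.1.2
    have hcpos : 0 < c₃ * (δ * r) * (δ * r - k * δ) := by
      have : 0 < δ * r - k * δ := by nlinarith
      positivity
    have hmain := diag_le_max (Φ := fun s t => V s (a t)) (p := fun t => Vt t (a t)) (w := w)
      (T := T) (B := c₂ * (δ * r) ^ 2) hcpos.le (hcontBall T hT.1.2 hle)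
      (fun t ht => (hWp t (hsub ht)).mono hsub) (fun t ht => (hWw t (hsub ht)).mono hsub)
      (by
        intro t ht hB
        have htτ := hsub ht
        have h1 := hB.trans_le (hVhigh t ht.1 _ (hamem t htτ))
        have h2 : δ * r < ‖a t‖ :=
          lt_of_pow_lt_pow_left₀ 2 (norm_nonneg _) (lt_of_mul_lt_mul_left h1 hc₂.le)
        have h3 := hpw t htτ
        have h4 := mul_le_mul_of_nonneg_left (hfK t htτ) (norm_nonneg (a t))
        have h5 : δ * r - k * δ ≤ ‖a t‖ - k * δ := by linarith
        have h6 : 0 ≤ δ * r - k * δ := by nlinarith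
        have h7 := mul_le_mul_of_nonneg_left
          (mul_le_mul h2.le h5 h6 (norm_nonneg _)) hc₃.le
        linarith)
      (right_mem_Icc.2 hT0.le)
    have hlow : c₁ * δ ^ 2 ≤ V T (a T) :=
      (mul_le_mul_of_nonneg_left (pow_le_pow_left₀ hδ.le hT.2 2) hc₁.le).trans
        (hVlow T hT.1.1 _ (hamem T hT.1))
    refine absurd (hlow.trans hmain) (not_le.2 (max_lt ?_ ?_))
    · have h1 := mul_le_mul_of_nonneg_left ha₀sq hc₂.le
      have h2 := mul_pos hcpos hT0
      have h3 : c₂ * (δ ^ 2 * k) = c₁ * δ ^ 2 := by rw [hck]; ring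
      linarith
    · rw [mul_pow, hr2, hck]
      have h1 : 0 < c₂ * δ ^ 2 * k := by positivity
      nlinarith
  have hF0 : 0 ≤ LinfNorm (trunc τ f) := Real.iSup_nonneg fun _ => norm_nonneg _
  set F := LinfNorm (trunc τ f) with hF
  have hfF : ∀ t ∈ Icc 0 τ, ‖f t‖ ≤ F := by
    intro t ht
    have hbdd : BddAbove (range fun s : Ici (0:ℝ) => ‖trunc τ f s.1‖) := by
      refine ⟨ru, ?_⟩
      rintro _ ⟨s, rfl⟩
      by_cases hs : s.1 ≤ τ
      · simpa [trunc, hs] using (hfsmall s.1 ⟨s.2, hs⟩).trans (min_le_left _ _)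
      · simpa [trunc, hs] using hru.le
    have h1 : ‖trunc τ f t‖ ≤ F := le_ciSup hbdd ⟨t, ht.1⟩
    simpa only [trunc, ht.2, if_true] using h1
  have hbound : ∀ t ∈ Icc 0 τ,
      ‖a t‖ ≤ ‖a₀‖ * Real.sqrt (c₂ / c₁) + c₂ * c₄ * K / (c₁ * c₃) * F := by
    intro t ht
    rcases lt_or_ge c₂ c₁ with hlt | hle
    · have h1 := (hVlow t ht.1 _ (hamem t ht)).trans (hVhigh t ht.1 _ (hamem t ht))
      have h2 : ‖a t‖ ^ 2 ≤ 0 := by nlinarith [sq_nonneg ‖a t‖]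
      have h3 : ‖a t‖ = 0 := pow_eq_zero_iff two_ne_zero |>.1 (le_antisymm h2 (sq_nonneg _))
      rw [h3]; positivity
    have hcont : ContinuousOn (fun t => V t (a t)) (Icc 0 τ) := by
      rcases hle.eq_or_lt with heq | hlt
      · refine (continuousOn_const.mul (hacont.norm.pow 2) :
          ContinuousOn (fun t => c₁ * ‖a t‖ ^ 2) (Icc 0 τ)).congr fun s hs => ?_
        exact le_antisymm (heq ▸ hVhigh s hs.1 _ (hamem s hs)) (hVlow s hs.1 _ (hamem s hs))
      · exact hcontBall τ le_rfl fun s hs => (hstay hlt s hs).le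
    set b := c₄ * (K * F) / c₃ with hb
    have hb0 : 0 ≤ b := by positivity
    have hmain := diag_le_max (Φ := fun s t => V s (a t)) (p := fun t => Vt t (a t)) (w := w)
      (T := τ) (B := c₂ * b ^ 2) le_rfl hcont hWp hWw
      (by
        intro s hs hB
        have h1 := hB.trans_le (hVhigh s hs.1 _ (hamem s hs))
        have h2 : b < ‖a s‖ :=
          lt_of_pow_lt_pow_left₀ 2 (norm_nonneg _) (lt_of_mul_lt_mul_left h1 hc₂.le)
        have h3 := hpw s hs
        have h4 : c₄ * (K * ‖f s‖) ≤ c₃ * b := by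
          rw [hb, mul_div_cancel₀ _ hc₃.ne']
          have := hfF s hs
          gcongr
        have h5 : c₄ * (K * ‖f s‖) ≤ c₃ * ‖a s‖ := h4.trans (by gcongr)
        have h6 := mul_le_mul_of_nonneg_left h5 (norm_nonneg (a s))
        linarith) ht
    have hlow := hVlow t ht.1 _ (hamem t ht)
    have hb_eq : c₂ * c₄ * K / (c₁ * c₃) * F = c₂ / c₁ * b := by rw [hb]; field_simp
    have hone : 1 ≤ c₂ / c₁ := (one_le_div hc₁).2 hle
    set κ := c₂ / c₁ with hκ
    have hκc : c₂ = c₁ * κ := by rw [hκ]; field_simp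
    rw [hb_eq]
    rcases le_max_iff.1 hmain with h1 | h1
    · have h2 : ‖a t‖ ^ 2 ≤ (‖a₀‖ * Real.sqrt κ) ^ 2 := by
        rw [mul_pow, Real.sq_sqrt (by positivity)]
        refine le_of_mul_le_mul_left ?_ hc₁
        have h3 : c₁ * (‖a₀‖ ^ 2 * κ) = c₂ * ‖a₀‖ ^ 2 := by rw [hκc]; ring
        simp only [zero_mul, sub_zero] at h1
        linarith
      have h3 := (pow_le_pow_iff_left₀ (norm_nonneg _) (by positivity) two_ne_zero).1 h2
      have h4 : 0 ≤ κ * b := by positivity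
      linarith
    · have h2 : ‖a t‖ ^ 2 ≤ (κ * b) ^ 2 := by
        refine le_of_mul_le_mul_left ?_ hc₁
        have h3 : c₁ * (κ * b) ^ 2 = c₂ * b ^ 2 * κ := by rw [hκc]; ring
        have h4 : c₂ * b ^ 2 ≤ c₂ * b ^ 2 * κ := le_mul_of_one_le_right (by positivity) hone
        linarith
      have h3 := (pow_le_pow_iff_left₀ (norm_nonneg _) (by positivity) two_ne_zero).1 h2
      have h4 : 0 ≤ ‖a₀‖ * Real.sqrt κ := by positivity
      linarith
  have : Nonempty (Ici (0:ℝ)) := ⟨⟨0, h0τ.1⟩⟩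
  refine ciSup_le fun t => ?_
  by_cases ht : t.1 ≤ τ
  · have htI : t.1 ∈ Icc 0 τ := ⟨t.2, ht⟩
    simp only [trunc, ht, if_true]
    have h1 := hout t.1 t.2 _ (hamem _ htI) _ (hfmem t.1)
    have h2 := mul_le_mul_of_nonneg_left (hbound _ htI) hη₁
    have h3 := mul_le_mul_of_nonneg_left (hfF _ htI) hη₂
    have h4 : η₁ * c₂ * c₄ * K / (c₁ * c₃) * F = η₁ * (c₂ * c₄ * K / (c₁ * c₃) * F) := by ring
    linarith
  · simp only [trunc, ht, if_false, norm_zero]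
    positivity
end
end

section
/- Under the stated hypotheses (Lyapunov conditions with constants c₁, c₂, c₃, c₄, input bound with constant K, output bound with constants η₁, η₂, initial condition ‖a₀‖ ≤ δ√(c₁/c₂), and input satisfying sup_{0≤t≤τ} ‖f(t)‖ ≤ min{r_u, c₁c₃δ/(c₂c₄K)}), for every p ∈ [1,∞) the truncated output y_τ satisfies ‖y_τ‖_{Lp} ≤ γ‖f_τ‖_{Lp} + β, where γ = η₂ + η₁c₂c₄K/(c₁c₃) and β = η₁‖a₀‖√(c₂/c₁) · (2c₂/(c₃p))^{1/p}. -/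
/-!
The Lyapunov function along the trajectory, `W t = V t (a t)`, formally satisfies
`W' ≤ -c₃ ‖a‖² + c₄ K ‖f‖ ‖a‖`, hence `(√W)' ≤ -l √W + κ ‖f‖` with `l = c₃ / (2 c₂)` and
`κ = c₄ K / (2 √c₁)`. Integrating, `‖a t‖` is at most `√(c₂/c₁) ‖a₀‖ exp (-l t)` plus
`c₄ K / (2 c₁)` times the convolution of `exp (-l ·)` with `‖f‖` (`sqrt_diag_le`). Minkowski's
inequality, the `Lp` norm of the exponential (`exp_Lp_le`) and the bound `l⁻¹ ‖f‖_{Lp}` for the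
convolution (`conv_Lp_le`) then give the gain.

`V` is only assumed to have partial derivatives, with no continuity in the pair of variables, so
the chain rule for `t ↦ V t (a t)` is not available pointwise. It is replaced by `diag_le`: if
`G t r` is jointly continuous and the sum of its two partial derivatives is nonpositive on the
diagonal, then `t ↦ G t t` is nonincreasing. If this failed, the closed set `P` of times near which
`G t t - 4 ε t` is not nonincreasing would be nonempty; by Baire's theorem the difference quotients
in the second variable are uniformly Cauchy up to `ε` on a portion of `P`, which makes the chain
rule valid up to `4 ε` between points of that portion, while off `P` monotonicity holds by
definition. So the function is nonincreasing across the portion, a contradiction.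

Joint continuity of `V t (a r)` follows from the gradient bound while `a` stays in the ball of
radius `δ`. If `c₁ < c₂`, the trajectory never leaves that ball: with `θ = c₁² δ² / c₂` the input
bound makes `exp (l t) (W t - θ)` nonincreasing, so `W` stays strictly below `c₁ δ²` for `t > 0`.
If `c₂ ≤ c₁`, then `V t x = c₁ ‖x‖²` on `D` and joint continuity is immediate.
-/

noncomputable section

open Set MeasureTheory

open Filter Topology

/-! ### A chain-rule inequality along the diagonal -/

theorem le_of_locally_antitone_s2 {U : ℝ → ℝ} {x z : ℝ} (hxz : x < z)
    (hU : ContinuousOn U (Icc x z))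
    (hloc : ∀ y ∈ Ioo x z, ∃ᶠ w in 𝓝[>] y, U w ≤ U y) : U z ≤ U x := by
  have key : ∀ y ∈ Ioo x z, U z ≤ U y := by
    intro y hy
    refine image_le_of_liminf_slope_right_le_deriv_boundary (f := U) (a := y) (b := z)
      (B := fun _ => U y) (B' := fun _ => 0) (hU.mono (Icc_subset_Icc hy.1.le le_rfl)) le_rfl
      continuousOn_const (fun w _ => hasDerivWithinAt_const w _ _) ?_ ⟨hy.2.le, le_rfl⟩
    intro w hw r hr
    refine ((hloc w ⟨hy.1.trans_le hw.1, hw.2⟩).and_eventually self_mem_nhdsWithin).mono ?_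
    rintro v ⟨hv, hwv⟩
    rw [slope_def_field]
    exact (div_nonpos_of_nonpos_of_nonneg (by linarith) (sub_nonneg.2 (le_of_lt hwv))).trans_lt hr
  have hc : Tendsto U (𝓝[>] x) (𝓝 (U x)) :=
    ((hU x ⟨le_rfl, hxz.le⟩).mono_of_mem_nhdsWithin (Icc_mem_nhdsGT hxz))
  exact ge_of_tendsto hc (by filter_upwards [Ioo_mem_nhdsGT hxz] with y hy using key y hy)

/-- The quantitative form of `diag_le`, with slack `4 * ε` and with one-sided
derivatives for a function defined for all values of the second variable. -/
theorem diag_le_aux {G : ℝ → ℝ → ℝ} {A B : ℝ → ℝ} {α β : ℝ} (hαβ : α < β)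
    (hG : ContinuousOn (fun z : ℝ × ℝ => G z.1 z.2) (Icc α β ×ˢ univ))
    (hA : ∀ t ∈ Icc α β, HasDerivWithinAt (fun s => G s t) (A t) (Ici t) t)
    (hB : ∀ t ∈ Icc α β, HasDerivWithinAt (G t) (B t) (Iic t) t)
    (hAB : ∀ t ∈ Icc α β, A t + B t ≤ 0) {ε : ℝ} (hε : 0 < ε) :
    G β β - 4 * ε * β ≤ G α α - 4 * ε * α := by
  set U : ℝ → ℝ := fun t => G t t - 4 * ε * t with hUdef
  have hdiag : ContinuousOn (fun t => G t t) (Icc α β) :=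
    hG.comp (f := fun t : ℝ => (t, t)) (by fun_prop) (fun t ht => ⟨ht, mem_univ _⟩)
  have hU : ContinuousOn U (Icc α β) := hdiag.sub (by fun_prop)
  -- `O` is the relatively open set of times near which `U` is nonincreasing
  set O : Set ℝ := {x | ∃ ρ > 0, ∀ c ∈ Icc α β, ∀ d ∈ Icc α β, c ∈ Metric.ball x ρ →
    d ∈ Metric.ball x ρ → c ≤ d → U d ≤ U c} with hO
  have hOo : IsOpen O := by
    rw [Metric.isOpen_iff]
    rintro x ⟨ρ, hρ, hx⟩
    refine ⟨ρ / 2, by positivity, fun y hy => ⟨ρ / 2, by positivity, ?_⟩⟩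
    intro c hc d hd hcy hdy hcd
    have h1 : Metric.ball y (ρ / 2) ⊆ Metric.ball x ρ := by
      apply Metric.ball_subset_ball'
      rw [Metric.mem_ball] at hy; linarith
    exact hx c hc d hd (h1 hcy) (h1 hdy) hcd
  have hOfreq : ∀ x ∈ O, x ∈ Ico α β → ∃ᶠ w in 𝓝[>] x, U w ≤ U x := by
    rintro x ⟨ρ, hρ, hx⟩ hxab
    apply Eventually.frequently
    have h1 : Ioo x (min β (x + ρ)) ∈ 𝓝[>] x :=
      Ioo_mem_nhdsGT (lt_min hxab.2 (by linarith))
    filter_upwards [h1] with w hw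
    have hw2 := lt_min_iff.1 hw.2
    refine hx x ⟨hxab.1, hxab.2.le⟩ w ⟨hxab.1.trans hw.1.le, hw2.1.le⟩
      (Metric.mem_ball_self hρ) ?_ hw.1.le
    rw [Metric.mem_ball, Real.dist_eq, abs_lt]
    constructor <;> linarith [hw.1]
  suffices hP : Icc α β ⊆ O by
    exact le_of_locally_antitone_s2 hαβ hU
      (fun y hy => hOfreq y (hP (Ioo_subset_Icc_self hy)) ⟨hy.1.le, hy.2⟩)
  by_contra hcon
  set P : Set ℝ := Icc α β \ O with hPdef
  have hPc : IsClosed P := isClosed_Icc.sdiff hOo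
  have hPne : P.Nonempty := by
    obtain ⟨x, hx, hxO⟩ := not_subset.1 hcon
    exact ⟨x, hx, hxO⟩
  have : Nonempty P := hPne.to_subtype
  have : CompleteSpace P := hPc.completeSpace_coe
  set Q : ℝ → ℝ → ℝ := fun t s => (G t t - G t (t - s)) / s with hQ
  have hQc : ∀ s, ContinuousOn (fun t => Q t s) (Icc α β) := by
    intro s
    refine (hdiag.sub ?_).div_const s
    exact hG.comp (f := fun t : ℝ => (t, t - s)) (by fun_prop) (fun t ht => ⟨ht, mem_univ _⟩)
  have hQlim : ∀ t ∈ Icc α β, Tendsto (Q t) (𝓝[>] 0) (𝓝 (B t)) := by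
    intro t ht
    have h1 := (hasDerivWithinAt_iff_tendsto_slope' (by simp)).1 (hasDerivWithinAt_Iio_iff_Iic.2 (hB t ht))
    have h2 : Tendsto (fun s : ℝ => t - s) (𝓝[>] 0) (𝓝[<] t) := by
      apply tendsto_nhdsWithin_of_tendsto_nhds_of_eventually_within
      · have : Tendsto (fun s : ℝ => t - s) (𝓝 0) (𝓝 (t - 0)) := by
          apply Continuous.tendsto; fun_prop
        rw [sub_zero] at this
        exact this.mono_left nhdsWithin_le_nhds
      · filter_upwards [self_mem_nhdsWithin] with s hs
        have : 0 < s := hs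
        simpa using this
    refine (h1.comp h2).congr ?_
    intro s
    simp only [Function.comp, slope_def_field, hQ]
    rw [← neg_div_neg_eq]; congr 1 <;> ring
  set E : ℕ → Set P := fun m => {t : P | ∀ s ∈ Ioo (0:ℝ) (1 / (m + 1)),
    ∀ s' ∈ Ioo (0:ℝ) (1 / (m + 1)), |Q t s - Q t s'| ≤ ε} with hE
  have hPsub : ∀ t : P, (t : ℝ) ∈ Icc α β := fun t => t.2.1
  have hEc : ∀ m, IsClosed (E m) := by
    intro m
    have hcont : ∀ s, Continuous (fun t : P => Q t s) := fun s =>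
      (hQc s).comp_continuous continuous_subtype_val hPsub
    simp only [hE, ofPred_forall]
    refine isClosed_iInter fun s => isClosed_iInter fun _ => isClosed_iInter fun s' =>
      isClosed_iInter fun _ => ?_
    exact isClosed_le ((hcont s).sub (hcont s')).abs continuous_const
  have hEU : ⋃ m, E m = univ := by
    rw [eq_univ_iff_forall]
    intro t
    have h1 := Metric.tendsto_nhds.1 (hQlim t (hPsub t)) (ε / 2) (by positivity)
    obtain ⟨η, hη, hη2⟩ := mem_nhdsGT_iff_exists_Ioo_subset.1 h1
    obtain ⟨m, hm⟩ := exists_nat_one_div_lt (show (0:ℝ) < η from hη)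
    refine mem_iUnion.2 ⟨m, fun s hs s' hs' => ?_⟩
    have h2 : dist (Q t s) (B t) < ε / 2 := hη2 ⟨hs.1, hs.2.trans hm⟩
    have h3 : dist (Q t s') (B t) < ε / 2 := hη2 ⟨hs'.1, hs'.2.trans hm⟩
    rw [← Real.dist_eq]
    linarith [dist_triangle_right (Q t s) (Q t s') (B t)]
  obtain ⟨m, x₀, hx₀⟩ := nonempty_interior_of_iUnion_of_closed hEc hEU
  obtain ⟨ρ', hρ', hball⟩ := Metric.isOpen_iff.1 isOpen_interior x₀ hx₀
  have hmpos : (0:ℝ) < 1 / (m + 1) := by positivity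
  -- on the portion of `P` inside a small ball around `x₀` the left difference quotients
  -- converge uniformly up to `ε`, which makes the chain rule valid along `P`
  have hfreqP : ∀ t ∈ P, t ∈ Metric.ball (x₀ : ℝ) ρ' →
      ∀ᶠ w in 𝓝[>] t, w ∈ P → U w ≤ U t := by
    intro t htP htb
    have hE_of : ∀ w (hw : w ∈ P), w ∈ Metric.ball (x₀ : ℝ) ρ' →
        ∀ s ∈ Ioo (0:ℝ) (1 / (m + 1)), ∀ s' ∈ Ioo (0:ℝ) (1 / (m + 1)), |Q w s - Q w s'| ≤ ε :=
      fun w hw hwb => interior_subset (hball (show (⟨w, hw⟩ : P) ∈ Metric.ball x₀ ρ' from hwb))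
    have htab : t ∈ Icc α β := htP.1
    obtain ⟨s₀, hs₀, hs₀'⟩ := ((Metric.tendsto_nhds.1 (hQlim t htab) ε hε).and
      (Ioo_mem_nhdsGT hmpos)).exists
    have h1 : ∀ᶠ w in 𝓝[Icc α β] t, dist (Q w s₀) (Q t s₀) < ε :=
      Metric.tendsto_nhds.1 (hQc s₀ t htab) ε hε
    have h1' := eventually_nhdsWithin_iff.1 h1
    have h2 := Metric.tendsto_nhds.1 ((hasDerivWithinAt_iff_tendsto_slope' (by simp)).1
      (hasDerivWithinAt_Ioi_iff_Ici.2 (hA t htab))) ε hε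
    have h3 : ∀ᶠ w in 𝓝 t, w ∈ Metric.ball (x₀ : ℝ) ρ' := Metric.isOpen_ball.mem_nhds htb
    have h4 : Ioo t (t + 1 / (m + 1)) ∈ 𝓝[>] t := Ioo_mem_nhdsGT (by linarith)
    filter_upwards [nhdsWithin_le_nhds h1', h2, nhdsWithin_le_nhds h3, h4] with w hw1 hw2 hw3 hw4 hwP
    have hpos : 0 < w - t := sub_pos.2 hw4.1
    have hw1 := hw1 hwP.1
    have h5 := hE_of w hwP hw3 (w - t) ⟨hpos, by linarith [hw4.2]⟩ s₀ hs₀'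
    rw [Real.dist_eq] at hw1 hw2 hs₀
    rw [slope_def_field] at hw2
    have e1 := (abs_le.1 h5).2
    have e2 := (abs_lt.1 hw1).2
    have e3 := (abs_lt.1 hs₀).2
    have e4 := (abs_lt.1 hw2).2
    have e5 := hAB t htab
    have e6 : Q w (w - t) + (G w t - G t t) / (w - t) ≤ 4 * ε := by linarith
    have e7 : Q w (w - t) + (G w t - G t t) / (w - t) = (G w w - G t t) / (w - t) := by
      simp only [hQ]
      rw [sub_sub_cancel, ← add_div]; congr 1; ring
    rw [e7, div_le_iff₀ hpos] at e6
    simp only [hUdef]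
    linarith
  refine x₀.2.2 ⟨ρ', hρ', ?_⟩
  intro c hc d hd hcb hdb hcd
  rcases hcd.eq_or_lt with rfl | hcd
  · exact le_rfl
  have hfreq : ∀ t ∈ Ico c d, ∃ᶠ w in 𝓝[>] t, U w ≤ U t := by
    intro t ht
    have htab : t ∈ Ico α β := ⟨hc.1.trans ht.1, ht.2.trans_le hd.2⟩
    by_cases htP : t ∈ P
    · have htb : t ∈ Metric.ball (x₀ : ℝ) ρ' := by
        rw [Metric.mem_ball, Real.dist_eq, abs_lt] at hcb hdb ⊢
        constructor <;> linarith [ht.1, ht.2]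
      have h1 := hfreqP t htP htb
      by_cases hacc : ∃ᶠ w in 𝓝[>] t, w ∈ P
      · exact (hacc.and_eventually h1).mono fun w hw => hw.2 hw.1
      · -- `t` is isolated in `P` from the right, so `U` is locally nonincreasing just after `t`
        rw [not_frequently] at hacc
        obtain ⟨η, hη, hη2⟩ := mem_nhdsGT_iff_exists_Ioo_subset.1 hacc
        apply Eventually.frequently
        filter_upwards [Ioo_mem_nhdsGT (lt_min htab.2 hη)] with w hw
        have hw2 := lt_min_iff.1 hw.2
        refine le_of_locally_antitone_s2 hw.1 (hU.mono (Icc_subset_Icc htab.1 hw2.1.le)) ?_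
        intro y hy
        have hyab : y ∈ Ico α β := ⟨htab.1.trans hy.1.le, hy.2.trans hw2.1⟩
        have hyP : y ∉ P := hη2 ⟨hy.1, hy.2.trans hw2.2⟩
        refine hOfreq y ?_ hyab
        by_contra hyO
        exact hyP ⟨⟨hyab.1, hyab.2.le⟩, hyO⟩
    · refine hOfreq t ?_ htab
      by_contra htO
      exact htP ⟨⟨htab.1, htab.2.le⟩, htO⟩
  exact le_of_locally_antitone_s2 hcd (hU.mono (Icc_subset_Icc hc.1 hd.2))
    (fun y hy => hfreq y ⟨hy.1.le, hy.2⟩)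

/-- Substitute for the chain rule: only separate differentiability on the diagonal and joint
continuity are assumed, so `t ↦ G t t` need not be differentiable. -/
theorem diag_le {G : ℝ → ℝ → ℝ} {A B : ℝ → ℝ} {α β : ℝ} (hαβ : α ≤ β)
    (hG : ContinuousOn (fun z : ℝ × ℝ => G z.1 z.2) (Icc α β ×ˢ Icc α β))
    (hA : ∀ t ∈ Icc α β, HasDerivWithinAt (fun s => G s t) (A t) (Ici t) t)
    (hB : ∀ t ∈ Icc α β, HasDerivWithinAt (G t) (B t) (Icc α β) t)
    (hAB : ∀ t ∈ Icc α β, A t + B t ≤ 0) :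
    G β β ≤ G α α := by
  rcases hαβ.eq_or_lt with rfl | hlt
  · exact le_rfl
  have hdiag : ContinuousOn (fun t => G t t) (Icc α β) :=
    hG.comp (f := fun t : ℝ => (t, t)) (by fun_prop) (fun t ht => ⟨ht, ht⟩)
  -- clamping the second variable changes the left derivative at `α` only
  have key : ∀ α' ∈ Ioo α β, ∀ ε > 0, G β β - 4 * ε * β ≤ G α' α' - 4 * ε * α' := by
    intro α' hα' ε hε
    set H : ℝ → ℝ → ℝ := fun t r => G t (max α (min β r)) with hH
    have hcl : ∀ r ∈ Icc α β, max α (min β r) = r := fun r hr => by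
      rw [min_eq_right hr.2, max_eq_right hr.1]
    have hsub : ∀ t ∈ Icc α' β, t ∈ Icc α β := fun t ht => ⟨hα'.1.le.trans ht.1, ht.2⟩
    have := diag_le_aux (G := H) (A := A) (B := B) hα'.2 ?_ ?_ ?_ (fun t ht => hAB t (hsub t ht)) hε
    · simpa only [hH, hcl β ⟨hlt.le, le_rfl⟩, hcl α' ⟨hα'.1.le, hα'.2.le⟩] using this
    · refine hG.comp (f := fun z : ℝ × ℝ => (z.1, max α (min β z.2))) (by fun_prop) ?_
      intro z hz
      exact ⟨hsub _ hz.1, le_max_left _ _, max_le hlt.le (min_le_left _ _)⟩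
    · intro t ht
      simp only [hH, hcl t (hsub t ht)]
      exact hA t (hsub t ht)
    · intro t ht
      have htα : α < t := hα'.1.trans_le ht.1
      have h1 : HasDerivWithinAt (G t) (B t) (Iic t) t :=
        (hB t (hsub t ht)).mono_of_mem_nhdsWithin
          (mem_of_superset (Icc_mem_nhdsLE htα) (Icc_subset_Icc le_rfl ht.2))
      refine h1.congr_of_eventuallyEq ?_ (by simp only [hH, hcl t (hsub t ht)])
      filter_upwards [Icc_mem_nhdsLE htα] with r hr
      simp only [hH, hcl r ⟨hr.1, hr.2.trans ht.2⟩]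
  have key2 : ∀ ε > 0, G β β - 4 * ε * β ≤ G α α - 4 * ε * α := by
    intro ε hε
    have hc : Tendsto (fun t => G t t - 4 * ε * t) (𝓝[>] α) (𝓝 (G α α - 4 * ε * α)) :=
      ((hdiag.sub (by fun_prop : ContinuousOn (fun t => 4 * ε * t) (Icc α β))) α
        ⟨le_rfl, hlt.le⟩).mono_of_mem_nhdsWithin (Icc_mem_nhdsGT hlt)
    exact ge_of_tendsto hc (by filter_upwards [Ioo_mem_nhdsGT hlt] with t ht using key t ht ε hε)
  have hc : Tendsto (fun ε : ℝ => G β β - 4 * ε * β) (𝓝[>] 0) (𝓝 (G β β - 4 * 0 * β)) :=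
    (Continuous.tendsto (by fun_prop) 0).mono_left nhdsWithin_le_nhds
  have hc' : Tendsto (fun ε : ℝ => G α α - 4 * ε * α) (𝓝[>] 0) (𝓝 (G α α - 4 * 0 * α)) :=
    (Continuous.tendsto (by fun_prop) 0).mono_left nhdsWithin_le_nhds
  have := le_of_tendsto_of_tendsto hc hc'
    (by filter_upwards [self_mem_nhdsWithin] with ε hε using key2 ε hε)
  simpa using this

/-! ### Differential inequality for the square root -/

/-- Comparison estimate for `√(W t t)`. The square root is regularised to `√(W + e²)` because
`W` may vanish. -/
theorem sqrt_diag_le {W : ℝ → ℝ → ℝ} {A B g : ℝ → ℝ} {T l κ : ℝ} (hT : 0 ≤ T) (hl : 0 ≤ l)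
    (hκ : 0 ≤ κ) (hg : Continuous g) (hg0 : ∀ t, 0 ≤ g t)
    (hW : ContinuousOn (fun z : ℝ × ℝ => W z.1 z.2) (Icc 0 T ×ˢ Icc 0 T))
    (hW0 : ∀ t ∈ Icc 0 T, 0 ≤ W t t)
    (hA : ∀ t ∈ Icc 0 T, HasDerivWithinAt (fun s => W s t) (A t) (Ici t) t)
    (hB : ∀ t ∈ Icc 0 T, HasDerivWithinAt (W t) (B t) (Icc 0 T) t)
    (hAB : ∀ t ∈ Icc 0 T, A t + B t ≤ -(2 * l) * W t t + 2 * κ * √(W t t) * g t) :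
    √(W T T) ≤ Real.exp (-(l * T)) *
      (√(W 0 0) + κ * ∫ s in (0:ℝ)..T, Real.exp (l * s) * g s) := by
  have key : ∀ e > 0, Real.exp (l * T) * √(W T T + e ^ 2) -
      (∫ s in (0:ℝ)..T, Real.exp (l * s) * (κ * g s + l * e)) ≤ √(W 0 0 + e ^ 2) := by
    intro e he
    have hF : ∀ t, HasDerivAt (fun t => ∫ s in (0:ℝ)..t, Real.exp (l * s) * (κ * g s + l * e))
        (Real.exp (l * t) * (κ * g t + l * e)) t := fun t =>
      (by fun_prop : Continuous fun s => Real.exp (l * s) * (κ * g s + l * e)).integral_hasStrictDerivAt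
        0 t |>.hasDerivAt
    have hFc : Continuous (fun t => ∫ s in (0:ℝ)..t, Real.exp (l * s) * (κ * g s + l * e)) :=
      continuous_iff_continuousAt.2 fun t => (hF t).continuousAt
    have hE : ∀ t, HasDerivAt (fun t => Real.exp (l * t)) (Real.exp (l * t) * l) t := fun t => by
      simpa using ((hasDerivAt_id t).const_mul l).exp
    have := diag_le (G := fun t r => Real.exp (l * t) * √(W t r + e ^ 2) -
        ∫ s in (0:ℝ)..t, Real.exp (l * s) * (κ * g s + l * e))
      (A := fun t => Real.exp (l * t) * l * √(W t t + e ^ 2) +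
        Real.exp (l * t) * (A t / (2 * √(W t t + e ^ 2))) - Real.exp (l * t) * (κ * g t + l * e))
      (B := fun t => Real.exp (l * t) * (B t / (2 * √(W t t + e ^ 2)))) hT ?_ ?_ ?_ ?_
    · simpa using this
    · refine ContinuousOn.sub (ContinuousOn.mul (by fun_prop) ?_) ?_
      · exact Real.continuous_sqrt.comp_continuousOn (hW.add continuousOn_const)
      · exact (hFc.comp continuous_fst).continuousOn
    · intro t ht
      have h0 : W t t + e ^ 2 ≠ 0 := by have := hW0 t ht; positivity
      exact ((hE t).hasDerivWithinAt.mul (((hA t ht).add_const _).sqrt h0)).sub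
        (hF t).hasDerivWithinAt
    · intro t ht
      have h0 : W t t + e ^ 2 ≠ 0 := by have := hW0 t ht; positivity
      exact ((((hB t ht).add_const _).sqrt h0).const_mul _).sub_const _
    · intro t ht
      have hw0 := hW0 t ht
      set S := √(W t t + e ^ 2) with hS
      have hSp : 0 < S := Real.sqrt_pos.2 (by positivity)
      have hSS : S ^ 2 = W t t + e ^ 2 := Real.sq_sqrt (by positivity)
      have heS : e ≤ S := Real.le_sqrt_of_sq_le (by linarith)
      have hwS : √(W t t) ≤ S := Real.sqrt_le_sqrt (by nlinarith)
      have hgt := hg0 t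
      have h1 : l * S + (A t + B t) / (2 * S) - (κ * g t + l * e) ≤ 0 := by
        have h2 : (A t + B t) / (2 * S) ≤ κ * g t + l * e - l * S := by
          rw [div_le_iff₀ (by positivity)]
          have a1 := hAB t ht
          have a2 : 0 ≤ (l * e) * (S - e) := mul_nonneg (by positivity) (by linarith)
          have a3 : 0 ≤ (κ * g t) * (S - √(W t t)) := mul_nonneg (by positivity) (by linarith)
          have a4 : l * S ^ 2 = l * W t t + l * e ^ 2 := by rw [hSS]; ring
          linarith [a1, a2, a3, a4]
        linarith
      have h3 : Real.exp (l * t) * l * S + Real.exp (l * t) * (A t / (2 * S))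
          - Real.exp (l * t) * (κ * g t + l * e) + Real.exp (l * t) * (B t / (2 * S))
          = Real.exp (l * t) * (l * S + (A t + B t) / (2 * S) - (κ * g t + l * e)) := by ring
      rw [h3]
      exact mul_nonpos_of_nonneg_of_nonpos (Real.exp_pos _).le h1
  have hsplit : ∀ e, (∫ s in (0:ℝ)..T, Real.exp (l * s) * (κ * g s + l * e)) =
      κ * (∫ s in (0:ℝ)..T, Real.exp (l * s) * g s) +
        e * ∫ s in (0:ℝ)..T, Real.exp (l * s) * l := by
    intro e
    rw [← intervalIntegral.integral_const_mul, ← intervalIntegral.integral_const_mul,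
      ← intervalIntegral.integral_add]
    · congr 1; ext s; ring
    · exact (by fun_prop : Continuous fun s => κ * (Real.exp (l * s) * g s)).intervalIntegrable _ _
    · exact (by fun_prop : Continuous fun s => e * (Real.exp (l * s) * l)).intervalIntegrable _ _
  simp only [hsplit] at key
  -- let the regularisation parameter tend to zero
  have hlim : Real.exp (l * T) * √(W T T + 0 ^ 2) -
      (κ * (∫ s in (0:ℝ)..T, Real.exp (l * s) * g s) +
        0 * ∫ s in (0:ℝ)..T, Real.exp (l * s) * l) ≤ √(W 0 0 + 0 ^ 2) := by
    refine le_of_tendsto_of_tendsto (b := 𝓝[>] (0:ℝ))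
      (f := fun e : ℝ => Real.exp (l * T) * √(W T T + e ^ 2) -
      (κ * (∫ s in (0:ℝ)..T, Real.exp (l * s) * g s) +
        e * ∫ s in (0:ℝ)..T, Real.exp (l * s) * l)) (g := fun e : ℝ => √(W 0 0 + e ^ 2)) ?_ ?_ ?_
    · exact (Continuous.tendsto (by fun_prop) 0).mono_left nhdsWithin_le_nhds
    · exact (Continuous.tendsto (by fun_prop) 0).mono_left nhdsWithin_le_nhds
    · filter_upwards [self_mem_nhdsWithin] with e he using key e he
  have h5 : Real.exp (l * T) * √(W T T) ≤
      √(W 0 0) + κ * ∫ s in (0:ℝ)..T, Real.exp (l * s) * g s := by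
    simpa using hlim
  rw [Real.exp_neg, inv_mul_eq_div, le_div_iff₀ (Real.exp_pos _), mul_comm]
  exact h5

/-! ### `Lp` estimates on `[0, τ]` -/

/-- No measurability of `g` is needed: both sides are the same Bochner integral, with the same
junk value in the non-integrable case. -/
theorem LpNorm_trunc {E : Type*} [NormedAddCommGroup E] {p τ : ℝ} (hp : 1 ≤ p) (hτ : 0 ≤ τ)
    (g : ℝ → E) : LpNorm p (trunc τ g) = (∫ t in (0:ℝ)..τ, ‖g t‖ ^ p) ^ (1 / p) := by
  have h1 : (fun t => ‖trunc τ g t‖ ^ p) = (Iic τ).indicator (fun t => ‖g t‖ ^ p) := by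
    ext t
    by_cases h : t ≤ τ
    · simp [trunc, h]
    · simp [trunc, h, Real.zero_rpow (by linarith : p ≠ 0)]
  rw [LpNorm, h1, setIntegral_indicator measurableSet_Iic, Ioi_inter_Iic,
    intervalIntegral.integral_of_le hτ]

/-- Minkowski's inequality on `[0, τ]`. -/
theorem rpow_integral_add_le {p τ : ℝ} (hp : 1 ≤ p) (hτ : 0 ≤ τ) {g k : ℝ → ℝ}
    (hg : Continuous g) (hk : Continuous k) :
    (∫ t in (0:ℝ)..τ, ‖g t + k t‖ ^ p) ^ (1 / p) ≤
      (∫ t in (0:ℝ)..τ, ‖g t‖ ^ p) ^ (1 / p) + (∫ t in (0:ℝ)..τ, ‖k t‖ ^ p) ^ (1 / p) := by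
  have hp0 : 0 < p := by linarith
  set μ : Measure ℝ := volume.restrict (Ioc 0 τ) with hμ
  have hrepr : ∀ g : ℝ → ℝ, Continuous g →
      (∫ t in (0:ℝ)..τ, ‖g t‖ ^ p) ^ (1 / p) = lpNorm g (ENNReal.ofReal p) μ := by
    intro g hg
    rw [lpNorm_eq_integral_norm_rpow_toReal (by simpa using hp0) ENNReal.ofReal_ne_top
      hg.aestronglyMeasurable, ENNReal.toReal_ofReal hp0.le, intervalIntegral.integral_of_le hτ,
      one_div]
  rw [hrepr g hg, hrepr k hk, hrepr (fun t => g t + k t) (hg.add hk)]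
  have hmem : MemLp g (ENNReal.ofReal p) μ := by
    obtain ⟨C, hC⟩ := (isCompact_Icc (a := (0:ℝ)) (b := τ)).exists_bound_of_continuousOn hg.continuousOn
    refine MemLp.of_bound hg.aestronglyMeasurable C ?_
    filter_upwards [ae_restrict_mem measurableSet_Ioc] with t ht using hC t (Ioc_subset_Icc_self ht)
  exact lpNorm_add_le hmem (by simpa using ENNReal.ofReal_le_ofReal hp)

theorem rpow_integral_const_mul {p τ c : ℝ} (hp : 1 ≤ p) (hτ : 0 ≤ τ) (hc : 0 ≤ c) (g : ℝ → ℝ) :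
    (∫ t in (0:ℝ)..τ, ‖c * g t‖ ^ p) ^ (1 / p) = c * (∫ t in (0:ℝ)..τ, ‖g t‖ ^ p) ^ (1 / p) := by
  have hp0 : p ≠ 0 := by linarith
  have h1 : ∀ t, ‖c * g t‖ ^ p = c ^ p * ‖g t‖ ^ p := fun t => by
    rw [norm_mul, Real.norm_of_nonneg hc, Real.mul_rpow hc (norm_nonneg _)]
  simp only [h1]
  rw [intervalIntegral.integral_const_mul, Real.mul_rpow (by positivity)
    (intervalIntegral.integral_nonneg hτ fun t _ => by positivity), ← Real.rpow_mul hc,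
    mul_one_div_cancel hp0, Real.rpow_one]

theorem exp_Lp_le {p τ l : ℝ} (hp : 1 ≤ p) (hτ : 0 ≤ τ) (hl : 0 < l) :
    (∫ t in (0:ℝ)..τ, ‖Real.exp (-(l * t))‖ ^ p) ^ (1 / p) ≤ (1 / (l * p)) ^ (1 / p) := by
  have hp0 : 0 < p := by linarith
  refine Real.rpow_le_rpow (intervalIntegral.integral_nonneg hτ fun t _ => by positivity) ?_
    (by positivity)
  have h1 : ∀ t, HasDerivAt (fun t => -(1 / (l * p)) * Real.exp (-(l * p) * t))
      (‖Real.exp (-(l * t))‖ ^ p) t := by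
    intro t
    have := (((hasDerivAt_id t).const_mul (-(l * p))).exp).const_mul (-(1 / (l * p)))
    simp only [id] at this
    refine this.congr_deriv ?_
    rw [Real.norm_of_nonneg (Real.exp_pos _).le, ← Real.exp_mul]
    have : -(l * t) * p = -(l * p) * t := by ring
    rw [this]
    field_simp
  rw [intervalIntegral.integral_eq_sub_of_hasDerivAt (fun t _ => h1 t)
    (Continuous.intervalIntegrable (by
      refine Continuous.rpow_const (by fun_prop) fun t => Or.inr hp0.le) _ _)]
  have : 0 < 1 / (l * p) * Real.exp (-(l * p) * τ) := by positivity
  simp only [mul_zero, Real.exp_zero]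
  linarith

/-- Young's convolution inequality for the kernel `exp (-l t)`, whose `L¹` norm is `l⁻¹`. The
convolution `u` solves `u' = -l u + g`; integrating `(u ^ p)'` over `[0, τ]` gives the bound. -/
theorem conv_Lp_le {p τ l : ℝ} (hp : 1 ≤ p) (hτ : 0 ≤ τ) (hl : 0 < l) {g : ℝ → ℝ}
    (hg : Continuous g) (hg0 : ∀ t, 0 ≤ g t) :
    (∫ t in (0:ℝ)..τ, ‖Real.exp (-(l * t)) * ∫ s in (0:ℝ)..t, Real.exp (l * s) * g s‖ ^ p) ^ (1 / p)
      ≤ l⁻¹ * (∫ t in (0:ℝ)..τ, ‖g t‖ ^ p) ^ (1 / p) := by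
  have hp0 : 0 < p := by linarith
  rw [← rpow_integral_const_mul hp hτ (by positivity)]
  refine Real.rpow_le_rpow (intervalIntegral.integral_nonneg hτ fun t _ => by positivity) ?_
    (by positivity)
  set u : ℝ → ℝ := fun t => Real.exp (-(l * t)) * ∫ s in (0:ℝ)..t, Real.exp (l * s) * g s with hu
  have hF : ∀ t, HasDerivAt (fun t => ∫ s in (0:ℝ)..t, Real.exp (l * s) * g s)
      (Real.exp (l * t) * g t) t := fun t =>
    (by fun_prop : Continuous fun s => Real.exp (l * s) * g s).integral_hasStrictDerivAt
      0 t |>.hasDerivAt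
  have hE : ∀ t, HasDerivAt (fun t => Real.exp (-(l * t))) (Real.exp (-(l * t)) * -l) t :=
    fun t => by simpa using ((hasDerivAt_id t).const_mul l).neg.exp
  have hud : ∀ t, HasDerivAt u (-l * u t + g t) t := by
    intro t
    refine ((hE t).mul (hF t)).congr_deriv ?_
    have : Real.exp (-(l * t)) * Real.exp (l * t) = 1 := by
      rw [← Real.exp_add]; simp
    simp only [hu]
    linear_combination (g t) * this
  have huc : Continuous u := continuous_iff_continuousAt.2 fun t => (hud t).continuousAt
  have hu0 : ∀ t, 0 ≤ t → 0 ≤ u t := fun t ht =>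
    mul_nonneg (Real.exp_pos _).le (intervalIntegral.integral_nonneg ht fun s _ =>
      mul_nonneg (Real.exp_pos _).le (hg0 s))
  have hpd : ∀ t, HasDerivAt (fun t => u t ^ p) ((-l * u t + g t) * p * u t ^ (p - 1)) t :=
    fun t => (hud t).rpow_const (Or.inr hp)
  have hc1 : Continuous fun t => (-l * u t + g t) * p * u t ^ (p - 1) :=
    (by fun_prop : Continuous fun t => (-l * u t + g t) * p).mul
      (huc.rpow_const fun t => Or.inr (by linarith))
  have hc2 : Continuous fun t => ‖u t‖ ^ p := huc.norm.rpow_const fun t => Or.inr hp0.le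
  have hc3 : Continuous fun t => ‖l⁻¹ * g t‖ ^ p :=
    (by fun_prop : Continuous fun t => ‖l⁻¹ * g t‖).rpow_const fun t => Or.inr hp0.le
  have hftc := intervalIntegral.integral_eq_sub_of_hasDerivAt (a := 0) (b := τ) (fun t _ => hpd t)
    (hc1.intervalIntegrable _ _)
  have hu00 : u 0 = 0 := by simp [hu]
  rw [hu00, Real.zero_rpow hp0.ne', sub_zero] at hftc
  -- weighted AM-GM (Young) absorbs the forcing term into the dissipation
  have hpt : ∀ t ∈ Icc 0 τ, (-l * u t + g t) * p * u t ^ (p - 1) ≤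
      l * ‖l⁻¹ * g t‖ ^ p - l * ‖u t‖ ^ p := by
    intro t ht
    have h0 := hu0 t ht.1
    have h1 : 0 ≤ l⁻¹ * g t := mul_nonneg (by positivity) (hg0 t)
    rw [Real.norm_of_nonneg h0, Real.norm_of_nonneg h1]
    have h2 := Real.geom_mean_le_arith_mean2_weighted (w₁ := 1 / p) (w₂ := 1 - 1 / p)
      (p₁ := (l⁻¹ * g t) ^ p) (p₂ := u t ^ p) (by positivity)
      (by rw [sub_nonneg, div_le_one hp0]; exact hp) (by positivity) (by positivity) (by ring)
    rw [← Real.rpow_mul h1, ← Real.rpow_mul h0, mul_one_div_cancel hp0.ne', Real.rpow_one,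
      show p * (1 - 1 / p) = p - 1 by field_simp] at h2
    have h3 : u t ^ (p - 1) * u t = u t ^ p := by
      have := Real.rpow_add_of_nonneg h0 (by linarith : 0 ≤ p - 1) zero_le_one
      rw [sub_add_cancel, Real.rpow_one] at this
      exact this.symm
    have h4 := mul_le_mul_of_nonneg_left h2 (by positivity : 0 ≤ l * p)
    have h5 : l * p * (l⁻¹ * g t * u t ^ (p - 1)) = g t * p * u t ^ (p - 1) := by
      field_simp
    have h6 : l * p * (1 / p * (l⁻¹ * g t) ^ p + (1 - 1 / p) * u t ^ p) =
        l * (l⁻¹ * g t) ^ p + l * p * u t ^ p - l * u t ^ p := by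
      field_simp
      ring
    rw [h5, h6] at h4
    have h7 : (-l * u t + g t) * p * u t ^ (p - 1) =
        g t * p * u t ^ (p - 1) - l * p * (u t ^ (p - 1) * u t) := by ring
    rw [h7, h3]
    linarith
  have hmono := intervalIntegral.integral_mono_on (μ := volume) hτ (hc1.intervalIntegrable _ _)
    (((hc3.const_mul l).sub (hc2.const_mul l)).intervalIntegrable _ _) hpt
  simp only [Pi.sub_apply] at hmono
  rw [hftc, intervalIntegral.integral_sub ((hc3.const_mul l).intervalIntegrable _ _)
    ((hc2.const_mul l).intervalIntegrable _ _), intervalIntegral.integral_const_mul,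
    intervalIntegral.integral_const_mul] at hmono
  have h8 : 0 ≤ u τ ^ p := Real.rpow_nonneg (hu0 τ hτ) p
  exact le_of_mul_le_mul_left (by linarith) hl

/-! ### The gain estimate -/

/-- A function that is continuous in time and Lipschitz on a ball in the state, uniformly in time,
is jointly continuous along a curve staying in that ball. -/
theorem continuousOn_along {n : ℕ} {D : Set (EuclideanSpace ℝ (Fin n))} {δ c₄ T : ℝ}
    (hδ : 0 < δ) (hDδ : {a : EuclideanSpace ℝ (Fin n) | ‖a‖ ≤ δ} ⊆ D)
    {V Vt : ℝ → EuclideanSpace ℝ (Fin n) → ℝ}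
    {DVa : ℝ → EuclideanSpace ℝ (Fin n) → (EuclideanSpace ℝ (Fin n) →L[ℝ] ℝ)}
    (hVdt : ∀ t ∈ Ici (0:ℝ), ∀ a ∈ D, HasDerivAt (fun s => V s a) (Vt t a) t)
    (hVda : ∀ t ∈ Ici (0:ℝ), ∀ a ∈ D, HasFDerivAt (fun b => V t b) (DVa t a) a)
    (hc₄ : 0 < c₄) (hVgrad : ∀ t ∈ Ici (0:ℝ), ∀ a ∈ D, ‖DVa t a‖ ≤ c₄ * ‖a‖)
    {a : ℝ → EuclideanSpace ℝ (Fin n)} (ha : ContinuousOn a (Icc 0 T))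
    (haδ : ∀ t ∈ Icc 0 T, ‖a t‖ ≤ δ) :
    ContinuousOn (fun z : ℝ × ℝ => V z.1 (a z.2)) (Icc 0 T ×ˢ Icc 0 T) := by
  have h1 : ContinuousOn (fun z : ℝ × EuclideanSpace ℝ (Fin n) => V z.1 z.2)
      (Icc 0 T ×ˢ Metric.closedBall 0 δ) := by
    refine continuousOn_prod_of_continuousOn_lipschitzOnWith' _ (Real.toNNReal (c₄ * δ)) ?_ ?_
    · intro t ht
      refine LipschitzOnWith.of_dist_le_mul fun x hx y hy => ?_
      rw [Real.coe_toNNReal _ (by positivity), dist_eq_norm, dist_eq_norm]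
      refine (convex_closedBall (0 : EuclideanSpace ℝ (Fin n)) δ).norm_image_sub_le_of_norm_hasFDerivWithin_le
        (f' := fun b => DVa t b) (fun b hb => (hVda t ht.1 b
          (hDδ (mem_closedBall_zero_iff.1 hb))).hasFDerivWithinAt) (fun b hb => ?_) hy hx
      rw [mem_closedBall_zero_iff] at hb
      exact (hVgrad t ht.1 b (hDδ hb)).trans (mul_le_mul_of_nonneg_left hb hc₄.le)
    · intro b hb t ht
      exact (hVdt t ht.1 b (hDδ (mem_closedBall_zero_iff.1 hb))).continuousAt.continuousWithinAt
  refine h1.comp (f := fun z : ℝ × ℝ => (z.1, a z.2)) ?_ ?_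
  · exact continuousOn_fst.prodMk (ha.comp continuousOn_snd fun z hz => hz.2)
  · exact fun z hz => ⟨hz.1, mem_closedBall_zero_iff.2 (haδ _ hz.2)⟩

/-- **Small-signal finite-gain Lp bound** (Khalil, Theorem 5.1, case p ∈ [1, ∞)):
the truncated output satisfies ‖y_τ‖_{Lp} ≤ γ‖f_τ‖_{Lp} + β with
γ = η₂ + η₁c₂c₄K/(c₁c₃) and β = η₁‖a₀‖√(c₂/c₁)·(2c₂/(c₃p))^{1/p}. -/
theorem ssfg_Lp_gain
    {n q : ℕ} (D : Set (EuclideanSpace ℝ (Fin n))) (Du : Set (EuclideanSpace ℝ (Fin q)))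
    (hD0 : (0 : EuclideanSpace ℝ (Fin n)) ∈ D) (hDu0 : (0 : EuclideanSpace ℝ (Fin q)) ∈ Du)
    (δ ru : ℝ) (hδ : 0 < δ) (hru : 0 < ru)
    (hDδ : {a : EuclideanSpace ℝ (Fin n) | ‖a‖ ≤ δ} ⊆ D)
    (hDuru : {f : EuclideanSpace ℝ (Fin q) | ‖f‖ ≤ ru} ⊆ Du)
    (N : ℝ → EuclideanSpace ℝ (Fin n) → EuclideanSpace ℝ (Fin q) → EuclideanSpace ℝ (Fin n))
    (V Vt : ℝ → EuclideanSpace ℝ (Fin n) → ℝ)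
    (DVa : ℝ → EuclideanSpace ℝ (Fin n) → (EuclideanSpace ℝ (Fin n) →L[ℝ] ℝ))
    (hVdt : ∀ t ∈ Ici (0:ℝ), ∀ a ∈ D, HasDerivAt (fun s => V s a) (Vt t a) t)
    (hVda : ∀ t ∈ Ici (0:ℝ), ∀ a ∈ D, HasFDerivAt (fun b => V t b) (DVa t a) a)
    (c₁ c₂ c₃ c₄ : ℝ) (hc₁ : 0 < c₁) (hc₂ : 0 < c₂) (hc₃ : 0 < c₃) (hc₄ : 0 < c₄)
    (hVlow : ∀ t ∈ Ici (0:ℝ), ∀ a ∈ D, c₁ * ‖a‖ ^ 2 ≤ V t a)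
    (hVhigh : ∀ t ∈ Ici (0:ℝ), ∀ a ∈ D, V t a ≤ c₂ * ‖a‖ ^ 2)
    (hVdecay : ∀ t ∈ Ici (0:ℝ), ∀ a ∈ D, Vt t a + DVa t a (N t a 0) ≤ -c₃ * ‖a‖ ^ 2)
    (hVgrad : ∀ t ∈ Ici (0:ℝ), ∀ a ∈ D, ‖DVa t a‖ ≤ c₄ * ‖a‖)
    (K : ℝ) (hK : 0 ≤ K)
    (hNlip : ∀ t ∈ Ici (0:ℝ), ∀ a ∈ D, ∀ u ∈ Du, ‖N t a u - N t a 0‖ ≤ K * ‖u‖)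
    (h : ℝ → EuclideanSpace ℝ (Fin n) → EuclideanSpace ℝ (Fin q) → EuclideanSpace ℝ (Fin n))
    (η₁ η₂ : ℝ) (hη₁ : 0 ≤ η₁) (hη₂ : 0 ≤ η₂)
    (hout : ∀ t ∈ Ici (0:ℝ), ∀ a ∈ D, ∀ u ∈ Du, ‖h t a u‖ ≤ η₁ * ‖a‖ + η₂ * ‖u‖)
    (τ : ℝ) (hτ : 0 < τ)
    (f : ℝ → EuclideanSpace ℝ (Fin q)) (hfc : Continuous f) (hfmem : ∀ t, f t ∈ Du)
    (a₀ : EuclideanSpace ℝ (Fin n)) (ha₀ : ‖a₀‖ ≤ δ * Real.sqrt (c₁ / c₂))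
    (hfsmall : ∀ t ∈ Icc (0:ℝ) τ, ‖f t‖ ≤ min ru (c₁ * c₃ * δ / (c₂ * c₄ * K)))
    (a : ℝ → EuclideanSpace ℝ (Fin n))
    (hamem : ∀ t ∈ Icc (0:ℝ) τ, a t ∈ D)
    (hode : ∀ t ∈ Icc (0:ℝ) τ, HasDerivWithinAt a (N t (a t) (f t)) (Icc (0:ℝ) τ) t)
    (hcd : ContinuousOn (fun t => N t (a t) (f t)) (Icc (0:ℝ) τ))
    (hinit : a 0 = a₀)
    (p : ℝ) (hp : 1 ≤ p) :
    LpNorm p (trunc τ (fun t => h t (a t) (f t))) ≤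
      (η₂ + η₁ * c₂ * c₄ * K / (c₁ * c₃)) * LpNorm p (trunc τ f)
        + η₁ * ‖a₀‖ * Real.sqrt (c₂ / c₁) * (2 * c₂ / (c₃ * p)) ^ (1/p) := by
  have hac : ContinuousOn a (Icc 0 τ) := fun t ht => (hode t ht).continuousWithinAt
  have h0τ : (0:ℝ) ∈ Icc 0 τ := ⟨le_rfl, hτ.le⟩
  set A : ℝ → ℝ := fun t => Vt t (a t) with hAdef
  set B : ℝ → ℝ := fun t => DVa t (a t) (N t (a t) (f t)) with hBdef
  have hA : ∀ t ∈ Icc 0 τ, HasDerivWithinAt (fun s => V s (a t)) (A t) (Ici t) t := fun t ht =>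
    (hVdt t ht.1 _ (hamem t ht)).hasDerivWithinAt
  have hB : ∀ t ∈ Icc 0 τ, HasDerivWithinAt (fun r => V t (a r)) (B t) (Icc 0 τ) t := fun t ht =>
    (hVda t ht.1 _ (hamem t ht)).comp_hasDerivWithinAt t (hode t ht)
  have hAB : ∀ t ∈ Icc 0 τ, A t + B t ≤ -c₃ * ‖a t‖ ^ 2 + c₄ * K * ‖f t‖ * ‖a t‖ := by
    intro t ht
    have h1 := hVdecay t ht.1 _ (hamem t ht)
    have h2 : B t = DVa t (a t) (N t (a t) 0) + DVa t (a t) (N t (a t) (f t) - N t (a t) 0) := by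
      rw [← map_add]; simp [hBdef]
    have h3 : DVa t (a t) (N t (a t) (f t) - N t (a t) 0) ≤ (c₄ * ‖a t‖) * (K * ‖f t‖) :=
      (Real.le_norm_self _).trans ((ContinuousLinearMap.le_opNorm _ _).trans
        (mul_le_mul (hVgrad t ht.1 _ (hamem t ht)) (hNlip t ht.1 _ (hamem t ht) _ (hfmem t))
          (norm_nonneg _) (by positivity)))
    simp only [hAdef]
    linarith
  have hW0 : V 0 (a 0) ≤ c₂ * ‖a₀‖ ^ 2 := by
    simpa only [hinit] using hVhigh 0 h0τ.1 _ (hamem 0 h0τ)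
  set l : ℝ := c₃ / (2 * c₂) with hl
  have hlpos : 0 < l := by positivity
  -- joint continuity of `(t, r) ↦ V t (a r)`
  have hcont : ContinuousOn (fun z : ℝ × ℝ => V z.1 (a z.2)) (Icc 0 τ ×ˢ Icc 0 τ) := by
    rcases le_or_gt c₂ c₁ with hle | hlt
    · -- here `V t x = c₁ ‖x‖ ^ 2` on `D`, so no confinement to the ball is needed
      have hV : ∀ z ∈ Icc 0 τ ×ˢ Icc 0 τ, V z.1 (a z.2) = c₁ * ‖a z.2‖ ^ 2 := by
        intro z hz
        refine le_antisymm ((hVhigh _ hz.1.1 _ (hamem _ hz.2)).trans ?_)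
          (hVlow _ hz.1.1 _ (hamem _ hz.2))
        exact mul_le_mul_of_nonneg_right hle (by positivity)
      refine ContinuousOn.congr ?_ hV
      exact continuousOn_const.mul ((hac.comp continuousOn_snd fun z hz => hz.2).norm.pow 2)
    · refine continuousOn_along hδ hDδ hVdt hVda hc₄ hVgrad hac ?_
      have ha₀2 : c₂ * ‖a₀‖ ^ 2 ≤ c₁ * δ ^ 2 := by
        have h1 : ‖a₀‖ ^ 2 ≤ (δ * √(c₁ / c₂)) ^ 2 := pow_le_pow_left₀ (norm_nonneg _) ha₀ 2
        rw [mul_pow, Real.sq_sqrt (by positivity)] at h1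
        calc c₂ * ‖a₀‖ ^ 2 ≤ c₂ * (δ ^ 2 * (c₁ / c₂)) := mul_le_mul_of_nonneg_left h1 hc₂.le
          _ = c₁ * δ ^ 2 := by field_simp
      have ha₀δ : ‖a₀‖ < δ := by
        have h1 : c₂ * ‖a₀‖ ^ 2 < c₂ * δ ^ 2 :=
          ha₀2.trans_lt (mul_lt_mul_of_pos_right hlt (by positivity))
        exact lt_of_pow_lt_pow_left₀ 2 hδ.le (lt_of_mul_lt_mul_left h1 hc₂.le)
      by_contra! hcon
      obtain ⟨t₁, ht₁, ht₁'⟩ := hcon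
      -- `T` is the first time at which the sphere of radius `δ` is reached
      set S : Set ℝ := Icc 0 τ ∩ (fun t => ‖a t‖) ⁻¹' Ici δ with hS
      have hSc : IsClosed S := hac.norm.preimage_isClosed_of_isClosed isClosed_Icc isClosed_Ici
      have hSb : BddBelow S := ⟨0, fun t ht => ht.1.1⟩
      have hTS : sInf S ∈ S := hSc.csInf_mem ⟨t₁, ht₁, ht₁'.le⟩ hSb
      set T := sInf S with hT
      have hTpos : 0 < T := by
        rcases hTS.1.1.eq_or_lt with h0 | h0
        · have h1 : δ ≤ ‖a T‖ := hTS.2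
          rw [← h0, hinit] at h1
          exact absurd h1 (not_le.2 ha₀δ)
        · exact h0
      have hsub : Icc 0 T ⊆ Icc 0 τ := Icc_subset_Icc le_rfl hTS.1.2
      have hlt' : ∀ t ∈ Ico 0 T, ‖a t‖ ≤ δ := by
        intro t ht
        by_contra! hh
        exact absurd (csInf_le hSb ⟨hsub ⟨ht.1, ht.2.le⟩, hh.le⟩) (not_le.2 ht.2)
      have hleT : ∀ t ∈ Icc 0 T, ‖a t‖ ≤ δ := by
        intro t ht
        rcases ht.2.eq_or_lt with rfl | h1
        · have h2 : Tendsto (fun t => ‖a t‖) (𝓝[<] T) (𝓝 ‖a T‖) :=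
            ((hac.mono hsub).norm T ⟨hTpos.le, le_rfl⟩).mono_of_mem_nhdsWithin
              (Icc_mem_nhdsLT hTpos)
          exact le_of_tendsto h2 (by
            filter_upwards [Ioo_mem_nhdsLT hTpos] with s hs using hlt' s ⟨hs.1.le, hs.2⟩)
        · exact hlt' t ⟨ht.1, h1⟩
      set θ : ℝ := c₁ ^ 2 * δ ^ 2 / c₂ with hθ
      have hE : ∀ t, HasDerivAt (fun t => Real.exp (l * t)) (Real.exp (l * t) * l) t :=
        fun t => by simpa using ((hasDerivAt_id t).const_mul l).exp
      have hdec := diag_le (G := fun t r => Real.exp (l * t) * (V t (a r) - θ))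
        (A := fun t => Real.exp (l * t) * l * (V t (a t) - θ) + Real.exp (l * t) * A t)
        (B := fun t => Real.exp (l * t) * B t) hTpos.le ?_ ?_ ?_ ?_
      · have h1 : c₁ * δ ^ 2 ≤ V T (a T) :=
          (mul_le_mul_of_nonneg_left (pow_le_pow_left₀ hδ.le hTS.2 2) hc₁.le).trans
            (hVlow T hTpos.le _ (hamem _ hTS.1))
        have h2 : θ < c₁ * δ ^ 2 := by
          rw [hθ, div_lt_iff₀ hc₂]
          have := mul_lt_mul_of_pos_left hlt (by positivity : 0 < c₁ * δ ^ 2)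
          linarith
        have h3 : 1 < Real.exp (l * T) := Real.one_lt_exp_iff.2 (by positivity)
        simp only [mul_zero, Real.exp_zero, one_mul] at hdec
        nlinarith [mul_lt_mul_of_pos_right h3 (by linarith : 0 < V T (a T) - θ)]
      · refine ContinuousOn.mul (by fun_prop) (ContinuousOn.sub ?_ continuousOn_const)
        exact continuousOn_along hδ hDδ hVdt hVda hc₄ hVgrad (hac.mono hsub) hleT
      · intro t ht
        exact (hE t).hasDerivWithinAt.mul ((hA t (hsub ht)).sub_const θ)
      · intro t ht
        exact (((hB t (hsub ht)).mono hsub).sub_const θ).const_mul _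
      · intro t ht
        have h1 := hAB t (hsub ht)
        have h2 : c₄ * K * ‖f t‖ ≤ c₃ * (c₁ * δ / c₂) := by
          have h3 := (hfsmall t (hsub ht)).trans (min_le_right _ _)
          rcases hK.eq_or_lt with rfl | hKpos
          · simp only [mul_zero, zero_mul]; positivity
          · calc c₄ * K * ‖f t‖ ≤ c₄ * K * (c₁ * c₃ * δ / (c₂ * c₄ * K)) :=
                  mul_le_mul_of_nonneg_left h3 (by positivity)
              _ = c₃ * (c₁ * δ / c₂) := by field_simp
        have h4 := mul_le_mul_of_nonneg_right h2 (norm_nonneg (a t))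
        have h5 : l * V t (a t) ≤ c₃ / 2 * ‖a t‖ ^ 2 := by
          calc l * V t (a t) ≤ l * (c₂ * ‖a t‖ ^ 2) :=
                mul_le_mul_of_nonneg_left (hVhigh t ht.1 _ (hamem t (hsub ht))) hlpos.le
            _ = c₃ / 2 * ‖a t‖ ^ 2 := by rw [hl]; field_simp
        have h6 : l * θ = c₃ / 2 * (c₁ * δ / c₂) ^ 2 := by rw [hl, hθ]; field_simp
        have h7 : l * (V t (a t) - θ) + (A t + B t) ≤ 0 := by
          have := mul_nonneg hc₃.le (sq_nonneg (‖a t‖ - c₁ * δ / c₂))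
          nlinarith
        have h8 : Real.exp (l * t) * l * (V t (a t) - θ) + Real.exp (l * t) * A t
            + Real.exp (l * t) * B t
            = Real.exp (l * t) * (l * (V t (a t) - θ) + (A t + B t)) := by ring
        rw [h8]
        exact mul_nonpos_of_nonneg_of_nonpos (Real.exp_pos _).le h7
  set u : ℝ → ℝ := fun t => Real.exp (-(l * t)) * ∫ s in (0:ℝ)..t, Real.exp (l * s) * ‖f s‖ with hu
  have hs₁ : 0 < √c₁ := Real.sqrt_pos.2 hc₁
  have hs₁2 : √c₁ ^ 2 = c₁ := Real.sq_sqrt hc₁.le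
  have hstate : ∀ t ∈ Icc 0 τ,
      ‖a t‖ ≤ √(c₂ / c₁) * ‖a₀‖ * Real.exp (-(l * t)) + c₄ * K / (2 * c₁) * u t := by
    intro t ht
    have hsub : Icc 0 t ⊆ Icc 0 τ := Icc_subset_Icc le_rfl ht.2
    have hlow : ∀ s ∈ Icc 0 τ, √c₁ * ‖a s‖ ≤ √(V s (a s)) := fun s hs => by
      rw [← Real.sqrt_sq (norm_nonneg (a s)), ← Real.sqrt_mul hc₁.le]
      exact Real.sqrt_le_sqrt (hVlow s hs.1 _ (hamem s hs))
    have hVnn : ∀ s ∈ Icc 0 τ, 0 ≤ V s (a s) := fun s hs =>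
      le_trans (by positivity) (hVlow s hs.1 _ (hamem s hs))
    have h1 := sqrt_diag_le (W := fun t r => V t (a r)) (A := A) (B := B) (g := fun t => ‖f t‖)
      (T := t) (l := l) (κ := c₄ * K / (2 * √c₁)) ht.1 hlpos.le (by positivity) hfc.norm
      (fun _ => norm_nonneg _) (hcont.mono (prod_mono hsub hsub)) (fun s hs => hVnn s (hsub hs))
      (fun s hs => hA s (hsub hs)) (fun s hs => (hB s (hsub hs)).mono hsub) ?_
    · have h2 : √(V 0 (a 0)) ≤ √c₂ * ‖a₀‖ := by
        rw [← Real.sqrt_sq (norm_nonneg a₀), ← Real.sqrt_mul hc₂.le]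
        exact Real.sqrt_le_sqrt hW0
      have h3 : √c₁ * ‖a t‖ ≤ Real.exp (-(l * t)) * (√c₂ * ‖a₀‖) + c₄ * K / (2 * √c₁) * u t := by
        refine (hlow t ht).trans (h1.trans ?_)
        have := mul_le_mul_of_nonneg_left h2 (Real.exp_pos (-(l * t))).le
        simp only [hu]
        linarith
      refine le_of_mul_le_mul_left (h3.trans_eq ?_) hs₁
      rw [Real.sqrt_div hc₂.le]
      have h4 : c₄ * K / (2 * √c₁) = √c₁ * (c₄ * K / (2 * c₁)) := by
        rw [← hs₁2]; field_simp; rw [Real.sqrt_sq hs₁.le]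
      rw [h4]
      field_simp
    · intro s hs
      have hs' := hsub hs
      have h2 := hAB s hs'
      have h3 : 2 * l * V s (a s) ≤ c₃ * ‖a s‖ ^ 2 := by
        calc 2 * l * V s (a s) ≤ 2 * l * (c₂ * ‖a s‖ ^ 2) :=
              mul_le_mul_of_nonneg_left (hVhigh s hs.1 _ (hamem s hs')) (by positivity)
          _ = c₃ * ‖a s‖ ^ 2 := by rw [hl]; field_simp
      have h4 : c₄ * K * ‖f s‖ * ‖a s‖ ≤
          2 * (c₄ * K / (2 * √c₁)) * √(V s (a s)) * ‖f s‖ := by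
        have h5 := mul_le_mul_of_nonneg_left (hlow s hs')
          (by positivity : 0 ≤ c₄ * K * ‖f s‖ / √c₁)
        calc c₄ * K * ‖f s‖ * ‖a s‖ = c₄ * K * ‖f s‖ / √c₁ * (√c₁ * ‖a s‖) := by field_simp
          _ ≤ _ := h5
          _ = _ := by field_simp
      linarith
  have huc : Continuous u := by
    refine Continuous.mul (by fun_prop) (continuous_iff_continuousAt.2 fun t => ?_)
    exact ((by fun_prop : Continuous fun s => Real.exp (l * s) * ‖f s‖).integral_hasStrictDerivAt
      0 t).hasDerivAt.continuousAt
  have hunn : ∀ t, 0 ≤ t → 0 ≤ u t := fun t ht =>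
    mul_nonneg (Real.exp_pos _).le (intervalIntegral.integral_nonneg ht fun s _ => by positivity)
  have hp0 : 0 < p := by linarith
  set C₁ : ℝ := η₁ * (√(c₂ / c₁) * ‖a₀‖) with hC₁
  set C₂ : ℝ := η₁ * (c₄ * K / (2 * c₁)) with hC₂
  have hC₁0 : 0 ≤ C₁ := by positivity
  have hC₂0 : 0 ≤ C₂ := by positivity
  set F : ℝ → ℝ := fun t => C₁ * Real.exp (-(l * t)) + (C₂ * u t + η₂ * ‖f t‖) with hF
  have hFc : Continuous F := by simp only [hF]; fun_prop
  have hyF : ∀ t ∈ Icc 0 τ, ‖h t (a t) (f t)‖ ≤ ‖F t‖ := by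
    intro t ht
    refine ((hout t ht.1 _ (hamem t ht) _ (hfmem t)).trans ?_).trans (Real.le_norm_self _)
    have := mul_le_mul_of_nonneg_left (hstate t ht) hη₁
    simp only [hF, hC₁, hC₂]
    linarith
  rw [LpNorm_trunc hp hτ.le, LpNorm_trunc hp hτ.le]
  have hFint : Continuous fun t => ‖F t‖ ^ p := hFc.norm.rpow_const fun t => Or.inr hp0.le
  -- the output need not be measurable, so only integrability of the majorant is used
  have hmono : (∫ t in (0:ℝ)..τ, ‖h t (a t) (f t)‖ ^ p) ≤ ∫ t in (0:ℝ)..τ, ‖F t‖ ^ p := by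
    rw [intervalIntegral.integral_of_le hτ.le, intervalIntegral.integral_of_le hτ.le]
    refine integral_mono_of_nonneg (ae_of_all _ fun t => by positivity)
      (hFint.intervalIntegrable 0 τ).1 ?_
    filter_upwards [ae_restrict_mem measurableSet_Ioc] with t ht
    exact Real.rpow_le_rpow (norm_nonneg _) (hyF t (Ioc_subset_Icc_self ht)) hp0.le
  have hfn : ∀ t, ‖(‖f t‖)‖ = ‖f t‖ := fun t => norm_norm _
  have hconv := conv_Lp_le hp hτ.le hlpos hfc.norm (fun t => norm_nonneg (f t))
  have hexp := exp_Lp_le hp hτ.le hlpos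
  have hmul_e := rpow_integral_const_mul hp hτ.le hC₁0 (fun t => Real.exp (-(l * t)))
  have hmul_u := rpow_integral_const_mul hp hτ.le hC₂0 u
  have hmul_f := rpow_integral_const_mul hp hτ.le hη₂ (fun t => ‖f t‖)
  simp only [hfn] at hconv hmul_f
  set M : ℝ := (∫ t in (0:ℝ)..τ, ‖f t‖ ^ p) ^ (1 / p) with hM
  have hlp : 1 / (l * p) = 2 * c₂ / (c₃ * p) := by rw [hl]; field_simp
  rw [hlp] at hexp
  calc (∫ t in (0:ℝ)..τ, ‖h t (a t) (f t)‖ ^ p) ^ (1 / p)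
      ≤ (∫ t in (0:ℝ)..τ, ‖F t‖ ^ p) ^ (1 / p) :=
        Real.rpow_le_rpow (intervalIntegral.integral_nonneg hτ.le fun t _ => by positivity) hmono
          (by positivity)
    _ ≤ (∫ t in (0:ℝ)..τ, ‖C₁ * Real.exp (-(l * t))‖ ^ p) ^ (1 / p) +
        (∫ t in (0:ℝ)..τ, ‖C₂ * u t + η₂ * ‖f t‖‖ ^ p) ^ (1 / p) :=
        rpow_integral_add_le hp hτ.le (by fun_prop) (by fun_prop)
    _ ≤ (∫ t in (0:ℝ)..τ, ‖C₁ * Real.exp (-(l * t))‖ ^ p) ^ (1 / p) +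
        ((∫ t in (0:ℝ)..τ, ‖C₂ * u t‖ ^ p) ^ (1 / p) +
          (∫ t in (0:ℝ)..τ, ‖η₂ * ‖f t‖‖ ^ p) ^ (1 / p)) :=
        add_le_add le_rfl (rpow_integral_add_le hp hτ.le (by fun_prop) (by fun_prop))
    _ ≤ C₁ * (2 * c₂ / (c₃ * p)) ^ (1 / p) + (C₂ * (l⁻¹ * M) + η₂ * M) := by
        rw [hmul_e, hmul_u, hmul_f]
        exact add_le_add (mul_le_mul_of_nonneg_left hexp hC₁0)
          (add_le_add (mul_le_mul_of_nonneg_left hconv hC₂0) le_rfl)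
    _ = (η₂ + η₁ * c₂ * c₄ * K / (c₁ * c₃)) * M
        + η₁ * ‖a₀‖ * √(c₂ / c₁) * (2 * c₂ / (c₃ * p)) ^ (1 / p) := by
        have : C₂ * l⁻¹ = η₁ * c₂ * c₄ * K / (c₁ * c₃) := by rw [hC₂, hl]; field_simp
        rw [← this, hC₁]; ring
end
end

section
/- Suppose the symmetric matrix P satisfies the linear matrix inequalities P − εI ⪰ 0, G ⪯ 0, and sₘ ≥ 0 for m = 1,…,n. Then for every initial condition with ‖a₀‖ ≤ δ_f = δ√(λmin(P)/λmax(P)), every continuous input f with sup_{0≤t≤τ} ‖f(t)‖ ≤ f_LMI = λmin(P)εδ/(λmax(P)‖2P‖), and every continuously differentiable solution a : [0,τ] → ℝⁿ of ȧ(t) = La(t) + Υ(a(t)) + f(t) with a(0) = a₀, one has ‖a(t)‖ ≤ δ for all t ∈ [0,τ]. -/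
/-!
The energy `V(a) = aᵀPa` is a Lyapunov function whose sublevel set `{V ≤ λmin(P) δ²}` is forward
invariant. That set lies in the ball `‖a‖ ≤ δ` and contains the admissible initial conditions.
Evaluating `G ⪯ 0` at `(a, Υ(a))` removes the multipliers by losslessness, and Cauchy-Schwarz
`Υₘ(a)² ≤ δ² ‖Rₘ a‖²` on the ball gives `2 (Pa)ᵀ(La + Υ(a)) ≤ -ε ‖a‖²` (`Gmat_form`,
`dissipation`). The input contributes at most `‖a‖ (λmin/λmax) ε δ`, so
`V̇ ≤ ε ‖a‖ ((λmin/λmax) δ - ‖a‖)`.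

On the level set `V = λmin δ²` one has `‖a‖² ≥ (λmin/λmax) δ²`. If `λmin < λmax` this makes `V̇`
strictly negative there, and the fencing theorem for right derivatives applies. If `λmin = λmax`,
only `V̇ ≤ 0` is available on the level set; but then `P` is scalar, `Υ` drops out of `V̇`, and the
dissipation estimate becomes homogeneous in `a`, hence valid on all of `ℝⁿ`. Strict decrease then
holds on every level `V = λmin δ² + η` with `η > 0`, and `η → 0` concludes.
-/

noncomputable section

open Matrix Set MeasureTheory

/-- Euclidean norm on `Fin n → ℝ`. -/
def eNorm {n : ℕ} (a : Fin n → ℝ) : ℝ := Real.sqrt (∑ i, a i ^ 2)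

/-- The `L∞` norm of a vector-valued signal on `[0, ∞)`: `sup_{t ≥ 0} ‖g t‖`. -/
def eLinf {n : ℕ} (g : ℝ → Fin n → ℝ) : ℝ := ⨆ t : Set.Ici (0:ℝ), eNorm (g t.1)

/-- The `Lp` norm of a vector-valued signal on `[0, ∞)`: `(∫₀^∞ ‖g t‖^p dt)^(1/p)`. -/
def eLp {n : ℕ} (p : ℝ) (g : ℝ → Fin n → ℝ) : ℝ :=
  (∫ t in Set.Ioi (0:ℝ), eNorm (g t) ^ p) ^ (1/p)

/-- Smallest eigenvalue of a symmetric matrix, via its Rayleigh quotient characterization. -/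
def lamMin {n : ℕ} (P : Matrix (Fin n) (Fin n) ℝ) : ℝ :=
  sInf {r | ∃ a : Fin n → ℝ, eNorm a = 1 ∧ r = a ⬝ᵥ P.mulVec a}

/-- Largest eigenvalue of a symmetric matrix, via its Rayleigh quotient characterization. -/
def lamMax {n : ℕ} (P : Matrix (Fin n) (Fin n) ℝ) : ℝ :=
  sSup {r | ∃ a : Fin n → ℝ, eNorm a = 1 ∧ r = a ⬝ᵥ P.mulVec a}

/-- Spectral norm of a matrix: the induced Euclidean operator norm. -/
def specNorm {n : ℕ} (M : Matrix (Fin n) (Fin n) ℝ) : ℝ :=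
  sSup {r | ∃ a : Fin n → ℝ, eNorm a = 1 ∧ r = eNorm (M.mulVec a)}

/-- The quadratic nonlinearity `Υ`, with components `Υₘ(a) = aᵀ Rₘ a`. -/
def Ups {n : ℕ} (R : Fin n → Matrix (Fin n) (Fin n) ℝ) (a : Fin n → ℝ) : Fin n → ℝ :=
  fun m => a ⬝ᵥ (R m).mulVec a


/-- The 2n×2n block LMI matrix
`G = [[LᵀP + PL + εI + Σₘ sₘδ²RₘRₘ, P + Σᵢ μᵢMᵢ], [P + Σᵢ μᵢMᵢᵀ, −Σₘ sₘeₘeₘᵀ + Σⱼ κⱼTⱼ]]`,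
where `M₀ = I`, `Mᵢ = eᵢvᵀ` and `Tⱼ = eⱼvᵀ + veⱼᵀ`. -/
def Gmat {n : ℕ} (L : Matrix (Fin n) (Fin n) ℝ) (R : Fin n → Matrix (Fin n) (Fin n) ℝ)
    (v : Fin n → ℝ) (ε δ : ℝ) (μ : Fin (n+1) → ℝ) (κ s : Fin n → ℝ)
    (P : Matrix (Fin n) (Fin n) ℝ) : Matrix (Fin n ⊕ Fin n) (Fin n ⊕ Fin n) ℝ :=
  Matrix.fromBlocks
    (Lᵀ * P + P * L + ε • (1 : Matrix (Fin n) (Fin n) ℝ) + ∑ m, (s m * δ ^ 2) • (R m * R m))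
    (P + (μ 0 • (1 : Matrix (Fin n) (Fin n) ℝ) +
      ∑ i : Fin n, μ i.succ • Matrix.vecMulVec (Pi.single i (1:ℝ)) v))
    (P + (μ 0 • (1 : Matrix (Fin n) (Fin n) ℝ) +
      ∑ i : Fin n, μ i.succ • Matrix.vecMulVec v (Pi.single i (1:ℝ))))
    (-(∑ m, s m • Matrix.vecMulVec (Pi.single m (1:ℝ)) (Pi.single m (1:ℝ))) +
      ∑ j, κ j • (Matrix.vecMulVec (Pi.single j (1:ℝ)) v + Matrix.vecMulVec v (Pi.single j (1:ℝ))))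

/-! ### Euclidean norm and Rayleigh quotients -/

lemma eNorm_nonneg {n : ℕ} (a : Fin n → ℝ) : 0 ≤ eNorm a := Real.sqrt_nonneg _

lemma eNorm_sq {n : ℕ} (a : Fin n → ℝ) : eNorm a ^ 2 = a ⬝ᵥ a := by
  rw [eNorm, Real.sq_sqrt (Finset.sum_nonneg fun i _ => sq_nonneg _)]
  simp [dotProduct, sq]

lemma eNorm_smul {n : ℕ} (c : ℝ) (a : Fin n → ℝ) : eNorm (c • a) = |c| * eNorm a := by
  simp only [eNorm, Pi.smul_apply, smul_eq_mul, mul_pow, ← Finset.mul_sum]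
  rw [Real.sqrt_mul (sq_nonneg c), Real.sqrt_sq_eq_abs]

lemma dotProduct_le_eNorm {n : ℕ} (a b : Fin n → ℝ) : a ⬝ᵥ b ≤ eNorm a * eNorm b :=
  Real.sum_mul_le_sqrt_mul_sqrt _ _ _

lemma eNorm_eq_zero {n : ℕ} {a : Fin n → ℝ} (h : eNorm a = 0) : a = 0 := by
  have := eNorm_sq a
  rw [h] at this
  exact dotProduct_self_eq_zero.1 (by linarith)

lemma continuous_eNorm {n : ℕ} : Continuous (eNorm : (Fin n → ℝ) → ℝ) := by
  unfold eNorm; fun_prop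

/-- A continuous function takes a compact set of values on the Euclidean unit sphere; this makes
the extrema defining `lamMin`, `lamMax` and `specNorm` genuine. -/
lemma isCompact_sphere_values {n : ℕ} {g : (Fin n → ℝ) → ℝ} (hg : Continuous g) :
    IsCompact {r | ∃ a : Fin n → ℝ, eNorm a = 1 ∧ r = g a} := by
  have hS : IsCompact {a : Fin n → ℝ | eNorm a = 1} := by
    refine Metric.isCompact_of_isClosed_isBounded
      (isClosed_eq continuous_eNorm continuous_const)
      ((Metric.isBounded_closedBall (x := (0 : Fin n → ℝ)) (r := 1)).subset ?_)
    intro a ha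
    rw [mem_closedBall_zero_iff, pi_norm_le_iff_of_nonneg zero_le_one]
    intro i
    rw [Real.norm_eq_abs, ← Real.sqrt_sq_eq_abs, ← show eNorm a = 1 from ha]
    exact Real.sqrt_le_sqrt
      (Finset.single_le_sum (f := fun i => a i ^ 2) (fun i _ => sq_nonneg _) (Finset.mem_univ i))
  convert hS.image hg using 1
  ext r
  simp [eq_comm]

/-- Normalisation onto the unit sphere: it lets homogeneous bounds be checked there. -/
lemma exists_unit {n : ℕ} (a : Fin n → ℝ) (ha : a ≠ 0) :
    ∃ u : Fin n → ℝ, eNorm u = 1 ∧ a = eNorm a • u := by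
  have h : eNorm a ≠ 0 := fun h => ha (eNorm_eq_zero h)
  refine ⟨(eNorm a)⁻¹ • a, ?_, ?_⟩
  · rw [eNorm_smul, abs_of_nonneg (inv_nonneg.2 (eNorm_nonneg a)), inv_mul_cancel₀ h]
  · rw [smul_smul, mul_inv_cancel₀ h, one_smul]

lemma lamMin_le {n : ℕ} (P : Matrix (Fin n) (Fin n) ℝ) (a : Fin n → ℝ) :
    lamMin P * eNorm a ^ 2 ≤ a ⬝ᵥ P.mulVec a := by
  by_cases ha : a = 0
  · subst ha; simp [eNorm]
  obtain ⟨u, hu, hau⟩ := exists_unit a ha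
  have h : lamMin P ≤ u ⬝ᵥ P.mulVec u :=
    csInf_le (isCompact_sphere_values (g := fun a => a ⬝ᵥ P.mulVec a) (by fun_prop)).bddBelow
      ⟨u, hu, rfl⟩
  have h2 : a ⬝ᵥ P.mulVec a = (u ⬝ᵥ P.mulVec u) * eNorm a ^ 2 := by
    conv_lhs => rw [hau]
    simp [mulVec_smul]; ring
  rw [h2]
  gcongr

lemma le_lamMax {n : ℕ} (P : Matrix (Fin n) (Fin n) ℝ) (a : Fin n → ℝ) :
    a ⬝ᵥ P.mulVec a ≤ lamMax P * eNorm a ^ 2 := by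
  by_cases ha : a = 0
  · subst ha; simp [eNorm]
  obtain ⟨u, hu, hau⟩ := exists_unit a ha
  have h : u ⬝ᵥ P.mulVec u ≤ lamMax P :=
    le_csSup (isCompact_sphere_values (g := fun a => a ⬝ᵥ P.mulVec a) (by fun_prop)).bddAbove
      ⟨u, hu, rfl⟩
  have h2 : a ⬝ᵥ P.mulVec a = (u ⬝ᵥ P.mulVec u) * eNorm a ^ 2 := by
    conv_lhs => rw [hau]
    simp [mulVec_smul]; ring
  rw [h2]
  gcongr

lemma eNorm_mulVec_le {n : ℕ} (M : Matrix (Fin n) (Fin n) ℝ) (a : Fin n → ℝ) :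
    eNorm (M.mulVec a) ≤ specNorm M * eNorm a := by
  by_cases ha : a = 0
  · subst ha; simp [eNorm]
  obtain ⟨u, hu, hau⟩ := exists_unit a ha
  have h : eNorm (M.mulVec u) ≤ specNorm M :=
    le_csSup (isCompact_sphere_values (g := fun a => eNorm (M.mulVec a))
      (continuous_eNorm.comp (by fun_prop))).bddAbove ⟨u, hu, rfl⟩
  have h2 : eNorm (M.mulVec a) = eNorm (M.mulVec u) * eNorm a := by
    conv_lhs => rw [hau]
    rw [mulVec_smul, eNorm_smul, abs_of_nonneg (eNorm_nonneg a), mul_comm]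
  rw [h2]
  have := eNorm_nonneg a
  gcongr

lemma dotProduct_mulVec_symm {n : ℕ} {P : Matrix (Fin n) (Fin n) ℝ} (hP : Pᵀ = P)
    (x y : Fin n → ℝ) : x ⬝ᵥ P.mulVec y = P.mulVec x ⬝ᵥ y := by
  rw [dotProduct_mulVec, ← mulVec_transpose, hP]

/-! ### Dissipation from the matrix inequality -/

/-- The quadratic form of the block matrix at `(a, Υ(a))`: the lossless conditions annihilate every
multiplier term. -/
lemma Gmat_form {n : ℕ} (L : Matrix (Fin n) (Fin n) ℝ)
    (R : Fin n → Matrix (Fin n) (Fin n) ℝ) (hRsym : ∀ m, (R m)ᵀ = R m) (v : Fin n → ℝ)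
    (hloss : ∀ a : Fin n → ℝ, a ⬝ᵥ Ups R a = 0)
    (hlossv : ∀ a : Fin n → ℝ, v ⬝ᵥ Ups R a = 0)
    (ε δ : ℝ) (μ : Fin (n+1) → ℝ) (κ s : Fin n → ℝ)
    (P : Matrix (Fin n) (Fin n) ℝ) (hPsym : Pᵀ = P) (a : Fin n → ℝ) :
    Sum.elim a (Ups R a) ⬝ᵥ (Gmat L R v ε δ μ κ s P).mulVec (Sum.elim a (Ups R a)) =
      2 * (P.mulVec a ⬝ᵥ (L.mulVec a + Ups R a)) + ε * eNorm a ^ 2 +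
        ∑ m, s m * (δ ^ 2 * eNorm ((R m).mulVec a) ^ 2 - Ups R a m ^ 2) := by
  have h1 := hloss a
  have h2 := hlossv a
  set y := Ups R a
  have h1' : y ⬝ᵥ a = 0 := by rw [dotProduct_comm, h1]
  have h2' : y ⬝ᵥ v = 0 := by rw [dotProduct_comm, h2]
  have hL : a ⬝ᵥ (Lᵀ * P).mulVec a = P.mulVec a ⬝ᵥ L.mulVec a := by
    rw [← mulVec_mulVec, mulVec_transpose, dotProduct_comm, ← dotProduct_mulVec]
  have hL' : a ⬝ᵥ (P * L).mulVec a = P.mulVec a ⬝ᵥ L.mulVec a := by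
    rw [← mulVec_mulVec, dotProduct_mulVec_symm hPsym]
  have hR : ∀ m, a ⬝ᵥ (R m * R m).mulVec a = eNorm ((R m).mulVec a) ^ 2 := fun m => by
    rw [← mulVec_mulVec, dotProduct_mulVec_symm (hRsym m), eNorm_sq]
  have hyP : y ⬝ᵥ P.mulVec a = P.mulVec a ⬝ᵥ y := dotProduct_comm _ _
  rw [Gmat, fromBlocks_mulVec, sumElim_dotProduct_sumElim]
  simp only [Sum.elim_comp_inl, Sum.elim_comp_inr, add_mulVec, dotProduct_add, sum_mulVec,
    dotProduct_sum, smul_mulVec, dotProduct_smul, neg_mulVec, dotProduct_neg, one_mulVec,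
    vecMulVec_mulVec, hL, hL', hR, h1, h1', h2, h2', hyP, dotProduct_mulVec_symm hPsym a y,
    smul_eq_mul, ← eNorm_sq, mul_sub, Finset.sum_sub_distrib]
  simp only [mul_zero, zero_smul, smul_zero, Finset.sum_const_zero, MulOpposite.op_zero, add_zero,
    MulOpposite.smul_eq_mul_unop, dotProduct_single, single_dotProduct, MulOpposite.unop_op,
    one_mul, mul_one, mul_assoc, ← sq]
  ring


/-- The energy balance without input: on the ball of radius `δ`, Cauchy-Schwarz gives
`Υₘ(a)² ≤ δ² ‖Rₘ a‖²`, so the quadratic form of `G` dominates the derivative of `aᵀPa`. -/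
lemma dissipation {n : ℕ} (L : Matrix (Fin n) (Fin n) ℝ)
    (R : Fin n → Matrix (Fin n) (Fin n) ℝ) (hRsym : ∀ m, (R m)ᵀ = R m) (v : Fin n → ℝ)
    (hloss : ∀ a : Fin n → ℝ, a ⬝ᵥ Ups R a = 0)
    (hlossv : ∀ a : Fin n → ℝ, v ⬝ᵥ Ups R a = 0)
    (ε δ : ℝ) (μ : Fin (n+1) → ℝ) (κ s : Fin n → ℝ)
    (P : Matrix (Fin n) (Fin n) ℝ) (hPsym : Pᵀ = P)
    (hLMI₂ : (-(Gmat L R v ε δ μ κ s P)).PosSemidef)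
    (hs : ∀ m, 0 ≤ s m) (a : Fin n → ℝ) (ha : eNorm a ≤ δ) :
    2 * (P.mulVec a ⬝ᵥ (L.mulVec a + Ups R a)) ≤ -(ε * eNorm a ^ 2) := by
  have h := hLMI₂.dotProduct_mulVec_nonneg (Sum.elim a (Ups R a))
  rw [star_trivial, neg_mulVec, dotProduct_neg,
    Gmat_form L R hRsym v hloss hlossv ε δ μ κ s P hPsym a] at h
  have hsum : 0 ≤ ∑ m, s m * (δ ^ 2 * eNorm ((R m).mulVec a) ^ 2 - Ups R a m ^ 2) := by
    refine Finset.sum_nonneg fun m _ => mul_nonneg (hs m) ?_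
    have h1 : Ups R a m ≤ eNorm a * eNorm ((R m).mulVec a) := dotProduct_le_eNorm _ _
    have h2 : -Ups R a m ≤ eNorm a * eNorm ((R m).mulVec a) := by
      have := dotProduct_le_eNorm ((-1 : ℝ) • a) ((R m).mulVec a)
      rw [eNorm_smul] at this
      simpa [Ups] using this
    have h3 : eNorm a * eNorm ((R m).mulVec a) ≤ δ * eNorm ((R m).mulVec a) :=
      mul_le_mul_of_nonneg_right ha (eNorm_nonneg _)
    have h4 : Ups R a m ^ 2 ≤ (δ * eNorm ((R m).mulVec a)) ^ 2 :=
      sq_le_sq' (by linarith) (by linarith)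
    rw [mul_pow] at h4
    linarith
  linarith

/-! ### The energy along trajectories -/

/-- If all eigenvalues of a symmetric matrix coincide, it acts as a scalar. -/
lemma mulVec_dotProduct_of_lamMin_eq {n : ℕ} {P : Matrix (Fin n) (Fin n) ℝ} (hPsym : Pᵀ = P)
    (h : lamMin P = lamMax P) (a y : Fin n → ℝ) :
    P.mulVec a ⬝ᵥ y = lamMin P * (a ⬝ᵥ y) := by
  have hq : ∀ x : Fin n → ℝ, x ⬝ᵥ P.mulVec x = lamMin P * (x ⬝ᵥ x) := fun x => by
    have h1 := lamMin_le P x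
    have h2 := le_lamMax P x
    rw [← h] at h2
    rw [← eNorm_sq]
    exact le_antisymm h2 h1
  have h1 := hq (a + y)
  have h2 := hq a
  have h3 := hq y
  simp only [mulVec_add, dotProduct_add, add_dotProduct] at h1
  rw [dotProduct_comm y (P.mulVec a), dotProduct_mulVec_symm hPsym a y,
    dotProduct_comm y a] at h1
  linarith

lemma hasDerivWithinAt_energy {n : ℕ} {P : Matrix (Fin n) (Fin n) ℝ} (hPsym : Pᵀ = P)
    {a : ℝ → Fin n → ℝ} {a' : Fin n → ℝ} {S : Set ℝ} {t : ℝ} (h : HasDerivWithinAt a a' S t) :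
    HasDerivWithinAt (fun t => a t ⬝ᵥ P.mulVec (a t)) (2 * (P.mulVec (a t) ⬝ᵥ a')) S t := by
  have hi := hasDerivWithinAt_pi.1 h
  have hP : ∀ i, HasDerivWithinAt (fun t => P.mulVec (a t) i) (P.mulVec a' i) S t := fun i => by
    simp only [mulVec, dotProduct]
    exact HasDerivWithinAt.fun_sum fun j _ => (hi j).const_mul (P i j)
  have hV : HasDerivWithinAt (fun t => a t ⬝ᵥ P.mulVec (a t))
      (∑ i, (a' i * P.mulVec (a t) i + a t i * P.mulVec a' i)) S t := by
    simp only [dotProduct]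
    exact HasDerivWithinAt.fun_sum fun i _ => (hi i).mul (hP i)
  convert hV using 1
  rw [Finset.sum_add_distrib]
  change _ = a' ⬝ᵥ P.mulVec (a t) + a t ⬝ᵥ P.mulVec a'
  rw [dotProduct_mulVec_symm hPsym (a t) a', dotProduct_comm a']
  ring

/-- **LMI-certified state bound** (Theorem 2, state-variable conclusion):
if the LMIs P − εI ⪰ 0, G ⪯ 0, sₘ ≥ 0 are feasible, then for every
‖a₀‖ ≤ δ√(λmin(P)/λmax(P)) and every input with
sup_{0≤t≤τ}‖f(t)‖ ≤ λmin(P)εδ/(λmax(P)‖2P‖), the solution of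
ȧ = La + Υ(a) + f satisfies ‖a(t)‖ ≤ δ on [0, τ]. -/
theorem lmi_state_bound
    {n : ℕ} (L : Matrix (Fin n) (Fin n) ℝ)
    (hHurwitz : ∀ z ∈ spectrum ℂ (L.map (algebraMap ℝ ℂ)), z.re < 0)
    (R : Fin n → Matrix (Fin n) (Fin n) ℝ) (hRsym : ∀ m, (R m)ᵀ = R m)
    (v : Fin n → ℝ)
    (hloss : ∀ a : Fin n → ℝ, a ⬝ᵥ Ups R a = 0)
    (hlossv : ∀ a : Fin n → ℝ, v ⬝ᵥ Ups R a = 0)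
    (ε δ : ℝ) (hε : 0 < ε) (hδ : 0 < δ)
    (μ : Fin (n+1) → ℝ) (κ s : Fin n → ℝ)
    (P : Matrix (Fin n) (Fin n) ℝ) (hPsym : Pᵀ = P)
    (hLMI₁ : (P - ε • (1 : Matrix (Fin n) (Fin n) ℝ)).PosSemidef)
    (hLMI₂ : (-(Gmat L R v ε δ μ κ s P)).PosSemidef)
    (hs : ∀ m, 0 ≤ s m)
    (τ : ℝ) (hτ : 0 < τ)
    (a₀ : Fin n → ℝ) (ha₀ : eNorm a₀ ≤ δ * Real.sqrt (lamMin P / lamMax P))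
    (f : ℝ → Fin n → ℝ) (hfc : Continuous f)
    (hfsmall : ∀ t ∈ Icc (0:ℝ) τ,
      eNorm (f t) ≤ lamMin P * ε * δ / (lamMax P * specNorm ((2:ℝ) • P)))
    (a : ℝ → Fin n → ℝ)
    (hode : ∀ t ∈ Icc (0:ℝ) τ,
      HasDerivWithinAt a (L.mulVec (a t) + Ups R (a t) + f t) (Icc (0:ℝ) τ) t)
    (hinit : a 0 = a₀) :
    ∀ t ∈ Icc (0:ℝ) τ, eNorm (a t) ≤ δ := by
  rcases Nat.eq_zero_or_pos n with rfl | hn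
  · intro t _
    simpa [eNorm] using hδ.le
  have hne : (fun _ => 1 : Fin n → ℝ) ≠ 0 := fun h => one_ne_zero (congrFun h ⟨0, hn⟩)
  obtain ⟨u, hu, -⟩ := exists_unit _ hne
  have hPε : ∀ x : Fin n → ℝ, ε * eNorm x ^ 2 ≤ x ⬝ᵥ P.mulVec x := fun x => by
    have h := hLMI₁.dotProduct_mulVec_nonneg x
    rw [star_trivial, sub_mulVec, smul_mulVec, one_mulVec, dotProduct_sub, dotProduct_smul,
      smul_eq_mul, ← eNorm_sq] at h
    linarith
  have hεl : ε ≤ lamMin P := by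
    refine le_csInf ⟨_, u, hu, rfl⟩ ?_
    rintro r ⟨x, hx, rfl⟩
    simpa [hx] using hPε x
  have hlM : lamMin P ≤ lamMax P := by
    have h1 := lamMin_le P u
    have h2 := le_lamMax P u
    rw [hu] at h1 h2
    linarith
  have hS : 0 < specNorm ((2 : ℝ) • P) := by
    have h1 := hPε u
    have h2 := dotProduct_le_eNorm u (((2 : ℝ) • P).mulVec u)
    have h3 := eNorm_mulVec_le ((2 : ℝ) • P) u
    rw [smul_mulVec, dotProduct_smul, smul_eq_mul, ← smul_mulVec] at h2
    rw [hu] at h1 h2 h3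
    linarith
  set l := lamMin P with hl
  set M := lamMax P with hM
  have hl0 : 0 < l := hε.trans_le hεl
  have hM0 : 0 < M := hl0.trans_le hlM
  have hinput : ∀ t ∈ Icc (0:ℝ) τ,
      2 * (P.mulVec (a t) ⬝ᵥ f t) ≤ eNorm (a t) * (l / M * ε * δ) := fun t ht => by
    have h1 := dotProduct_le_eNorm (((2 : ℝ) • P).mulVec (a t)) (f t)
    rw [smul_mulVec, smul_dotProduct, smul_eq_mul, ← smul_mulVec] at h1
    refine h1.trans ?_
    calc eNorm (((2 : ℝ) • P).mulVec (a t)) * eNorm (f t)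
        ≤ (specNorm ((2 : ℝ) • P) * eNorm (a t)) *
            (l * ε * δ / (M * specNorm ((2 : ℝ) • P))) :=
          mul_le_mul (eNorm_mulVec_le _ _) (hfsmall t ht) (eNorm_nonneg _)
            (mul_nonneg hS.le (eNorm_nonneg _))
      _ = eNorm (a t) * (l / M * ε * δ) := by field_simp
  have hdiss := dissipation L R hRsym v hloss hlossv ε δ μ κ s P hPsym hLMI₂ hs
  -- The energy decreases strictly as soon as the undriven estimate holds and `‖a‖ > (l / M) δ`.
  have hneg : ∀ t ∈ Icc (0:ℝ) τ,
      2 * (P.mulVec (a t) ⬝ᵥ (L.mulVec (a t) + Ups R (a t))) ≤ -(ε * eNorm (a t) ^ 2) →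
      l / M * δ < eNorm (a t) →
      2 * (P.mulVec (a t) ⬝ᵥ (L.mulVec (a t) + Ups R (a t) + f t)) < 0 := fun t ht h1 h2 => by
    have h3 := hinput t ht
    have h4 : 0 < eNorm (a t) := lt_of_le_of_lt (by positivity) h2
    have h5 := mul_pos (mul_pos hε h4) (sub_pos.2 h2)
    rw [dotProduct_add]
    nlinarith
  have hV : ∀ t ∈ Icc (0:ℝ) τ, HasDerivWithinAt (fun t => a t ⬝ᵥ P.mulVec (a t))
      (2 * (P.mulVec (a t) ⬝ᵥ (L.mulVec (a t) + Ups R (a t) + f t))) (Icc 0 τ) t :=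
    fun t ht => hasDerivWithinAt_energy hPsym (hode t ht)
  have hV0 : a 0 ⬝ᵥ P.mulVec (a 0) ≤ l * δ ^ 2 := by
    have h1 : eNorm (a 0) ^ 2 ≤ (δ * Real.sqrt (l / M)) ^ 2 :=
      pow_le_pow_left₀ (eNorm_nonneg _) (hinit ▸ ha₀) 2
    rw [mul_pow, Real.sq_sqrt (by positivity)] at h1
    calc a 0 ⬝ᵥ P.mulVec (a 0) ≤ M * eNorm (a 0) ^ 2 := le_lamMax P _
      _ ≤ M * (δ ^ 2 * (l / M)) := by gcongr
      _ = l * δ ^ 2 := by field_simp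
  have hfence : ∀ c, l * δ ^ 2 ≤ c →
      (∀ t ∈ Icc (0:ℝ) τ, a t ⬝ᵥ P.mulVec (a t) = c →
        2 * (P.mulVec (a t) ⬝ᵥ (L.mulVec (a t) + Ups R (a t) + f t)) < 0) →
      ∀ t ∈ Icc (0:ℝ) τ, a t ⬝ᵥ P.mulVec (a t) ≤ c := fun c hc h t ht =>
    image_le_of_deriv_right_lt_deriv_boundary (B := fun _ => c) (B' := fun _ => 0)
      (fun t ht => (hV t ht).continuousWithinAt)
      (fun t ht => (hV t (Ico_subset_Icc_self ht)).mono_of_mem_nhdsWithin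
        (Icc_mem_nhdsGE_of_mem ht))
      (hV0.trans hc) (fun t => hasDerivAt_const t c)
      (fun t ht => h t (Ico_subset_Icc_self ht)) ht
  have hball : ∀ t, a t ⬝ᵥ P.mulVec (a t) ≤ l * δ ^ 2 → eNorm (a t) ≤ δ := fun t h =>
    (pow_le_pow_iff_left₀ (eNorm_nonneg _) hδ.le two_ne_zero).1
      (le_of_mul_le_mul_left ((lamMin_le P (a t)).trans h) hl0)
  intro t ht
  refine hball t ?_
  rcases hlM.lt_or_eq with hlt | heq
  · -- On the level set itself, `‖a‖² ≥ (l / M) δ² > ((l / M) δ)²`.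
    refine hfence _ le_rfl (fun t ht h => hneg t ht (hdiss _ (hball t h.le)) ?_) t ht
    have h1 := le_lamMax P (a t)
    rw [h, ← hM] at h1
    have hq : l / M < 1 := (div_lt_one hM0).2 hlt
    have h2 : l / M * δ ^ 2 ≤ eNorm (a t) ^ 2 := by
      rw [div_mul_eq_mul_div, div_le_iff₀ hM0]; linarith
    refine lt_of_pow_lt_pow_left₀ 2 (eNorm_nonneg _) (lt_of_lt_of_le ?_ h2)
    have h3 : 0 < l / M := by positivity
    have h4 : 0 < l / M * δ ^ 2 := by positivity
    nlinarith
  · -- Here strictness can fail on the level set, so slightly larger levels are fenced instead.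
    refine le_of_forall_pos_le_add fun η hη => ?_
    refine hfence _ (by linarith) (fun t ht h => ?_) t ht
    have hδa : δ < eNorm (a t) := by
      have h1 := le_lamMax P (a t)
      rw [h, ← hM, ← heq] at h1
      exact lt_of_pow_lt_pow_left₀ 2 (eNorm_nonneg _)
        (lt_of_mul_lt_mul_left (by linarith) hl0.le)
    have ha0 : 0 < eNorm (a t) := hδ.trans hδa
    refine hneg t ht ?_ (by rw [← heq, div_self hl0.ne', one_mul]; exact hδa)
    -- `P` is scalar, so `Υ` does no work and the estimate on the `δ`-sphere is homogeneous.
    have hscal : ∀ x, P.mulVec x ⬝ᵥ Ups R x = 0 := fun x => by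
      rw [mulVec_dotProduct_of_lamMin_eq hPsym heq, hloss, mul_zero]
    have hb : eNorm ((δ / eNorm (a t)) • a t) = δ := by
      rw [eNorm_smul, abs_of_pos (by positivity), div_mul_cancel₀ _ ha0.ne']
    have h1 := hdiss ((δ / eNorm (a t)) • a t) hb.le
    rw [dotProduct_add, hscal, add_zero, mulVec_smul, mulVec_smul, smul_dotProduct,
      dotProduct_smul, smul_eq_mul, smul_eq_mul, eNorm_smul, abs_of_pos (by positivity)] at h1
    rw [dotProduct_add, hscal, add_zero]
    have hc : 0 < (δ / eNorm (a t)) ^ 2 := by positivity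
    refine le_of_mul_le_mul_left ?_ hc
    linarith
end
end
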